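/- arXiv:1309.1974 — 3 statements merged into one kernel-verified Lean document; each statement's English description precedes it below -/
import Mathlib

section
/- Let 1 ≤ n < α, p = 2n/(n+α), q = 2n/(n−α). Then the infimum N*(n, α) = inf{ ‖Ĩ_α F‖_{L^q(𝕊ⁿ)} : F ≥ 0 measurable on 𝕊ⁿ, ‖F‖_{L^p(𝕊ⁿ)} = 1 } is positive and is attained: there exists a nonnegative F₀ ∈ L^p(𝕊ⁿ) with ‖F₀‖_{L^p(𝕊ⁿ)} = 1 and ‖Ĩ_α F₀‖_{L^q(𝕊ⁿ)} = N*(n, α). -/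
open MeasureTheory ENNReal Metric

/-- The standard surface measure on the unit sphere `𝕊ⁿ ⊆ ℝ^(n+1)`. -/
noncomputable def sphereMeasure (n : ℕ) :
    Measure (sphere (0 : EuclideanSpace ℝ (Fin (n + 1))) 1) :=
  (volume : Measure (EuclideanSpace ℝ (Fin (n + 1)))).toSphere

/-- The singular integral operator `Ĩ_α F(ξ) = ∫_{𝕊ⁿ} F(η) |ξ-η|^(α-n) dη` on the sphere,
where `|ξ-η|` is the chordal distance in `ℝ^(n+1)`, valued in `ℝ≥0∞`. -/
noncomputable def sphereRiesz (n : ℕ) (α : ℝ)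
    (F : sphere (0 : EuclideanSpace ℝ (Fin (n + 1))) 1 → ℝ)
    (ξ : sphere (0 : EuclideanSpace ℝ (Fin (n + 1))) 1) : ℝ≥0∞ :=
  ∫⁻ η, ENNReal.ofReal (F η *
    dist (ξ : EuclideanSpace ℝ (Fin (n + 1))) (η : EuclideanSpace ℝ (Fin (n + 1))) ^ (α - n))
    ∂(sphereMeasure n)

/-- The set of values `‖Ĩ_α F‖_{L^q(𝕊ⁿ)}` over nonnegative `F ∈ L^p(𝕊ⁿ)`
with `‖F‖_{L^p(𝕊ⁿ)} = 1`. -/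
def minimizingValues (n : ℕ) (α p q : ℝ) : Set ℝ≥0∞ :=
  {r : ℝ≥0∞ | ∃ F : sphere (0 : EuclideanSpace ℝ (Fin (n + 1))) 1 → ℝ,
    Measurable F ∧ (∀ ξ, 0 ≤ F ξ) ∧
    Integrable (fun ξ => |F ξ| ^ p) (sphereMeasure n) ∧
    (∫ ξ, |F ξ| ^ p ∂(sphereMeasure n)) ^ (1 / p) = 1 ∧
    r = (∫⁻ ξ, (sphereRiesz n α F ξ) ^ q ∂(sphereMeasure n)) ^ (1 / q)}

set_option linter.unusedSectionVars false

section Boost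
variable {E : Type*} [NormedAddCommGroup E] [InnerProductSpace ℝ E]

/-- The time component of the point of the hyperboloid above `y`. -/
noncomputable def bA (y : E) : ℝ := Real.sqrt (1 + ‖y‖ ^ 2)

/-- Time component of the boost. -/
noncomputable def bT (y : E) (a : ℝ) (u : E) : ℝ := bA y * a + inner ℝ y u

/-- Space component of the boost. -/
noncomputable def bX (y : E) (a : ℝ) (u : E) : E := u + (a + inner ℝ y u / (1 + bA y)) • y

/-- Boost acting on the light cone, parametrized by the space component. -/
noncomputable def bPsi (y x : E) : E := bX y ‖x‖ x

lemma bA_sq (y : E) : bA y ^ 2 = 1 + ‖y‖ ^ 2 := Real.sq_sqrt (by positivity)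

lemma bA_pos (y : E) : 0 < bA y := Real.sqrt_pos.2 (by positivity)

lemma norm_lt_bA (y : E) : ‖y‖ < bA y := by
  have := bA_sq y
  have := bA_pos y
  nlinarith [norm_nonneg y]

lemma bA_neg (y : E) : bA (-y) = bA y := by simp [bA]

lemma bA_zero : bA (0 : E) = 1 := by simp [bA]

lemma boost_form (y : E) (a b : ℝ) (u v : E) :
    bT y a u * bT y b v - inner ℝ (bX y a u) (bX y b v) = a * b - inner ℝ u v := by
  have h := bA_sq y
  have h1 : 1 + bA y ≠ 0 := by have := bA_pos y; positivity
  simp only [bT, bX, inner_add_left, inner_add_right, inner_smul_left, inner_smul_right,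
    real_inner_self_eq_norm_sq, real_inner_comm y u, RCLike.conj_to_real]
  rw [show ‖y‖ ^ 2 = bA y ^ 2 - 1 by linarith]
  field_simp
  ring

lemma bT_norm_pos (y : E) {x : E} (hx : x ≠ 0) : 0 < bT y ‖x‖ x := by
  have h1 := abs_le.1 (abs_real_inner_le_norm y x)
  have h2 := norm_lt_bA y
  have h3 := norm_pos_iff.2 hx
  unfold bT
  nlinarith

lemma norm_bPsi (y x : E) : ‖bPsi y x‖ = bT y ‖x‖ x := by
  have h := boost_form y ‖x‖ ‖x‖ x x
  rw [real_inner_self_eq_norm_sq, real_inner_self_eq_norm_sq] at h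
  have h0 : 0 ≤ bT y ‖x‖ x := by
    by_cases hx : x = 0
    · simp [bT, hx]
    · exact (bT_norm_pos y hx).le
  change ‖bX y ‖x‖ x‖ = _
  have h2 : ‖bX y ‖x‖ x‖ ^ 2 = bT y ‖x‖ x ^ 2 := by linarith
  exact (pow_left_inj₀ (norm_nonneg _) h0 two_ne_zero).1 h2

lemma bPsi_neg_bPsi (y x : E) : bPsi (-y) (bPsi y x) = x := by
  have h1 : 1 + bA y ≠ 0 := by have := bA_pos y; positivity
  have h := bA_sq y
  rw [bPsi, bX, norm_bPsi, bA_neg]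
  have : bT y ‖x‖ x + inner ℝ (-y) (bPsi y x) / (1 + bA y) = ‖x‖ + inner ℝ y x / (1 + bA y) := by
    simp only [bPsi, bX, bT, inner_neg_left, inner_add_right, inner_smul_right,
      real_inner_self_eq_norm_sq]
    rw [show ‖y‖ ^ 2 = bA y ^ 2 - 1 by linarith]
    field_simp
    ring
  rw [this, bPsi, bX]
  simp

lemma bA_bX (y z : E) : bA (bX y (bA z) z) = bT y (bA z) z := by
  have h := boost_form y (bA z) (bA z) z z
  rw [real_inner_self_eq_norm_sq, real_inner_self_eq_norm_sq] at h
  have h0 : 0 ≤ bT y (bA z) z := by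
    have h1 := abs_le.1 (abs_real_inner_le_norm y z)
    have h2 := norm_lt_bA y
    have h3 := norm_lt_bA z
    unfold bT
    nlinarith [norm_nonneg y, norm_nonneg z]
  have h2 : bA (bX y (bA z) z) ^ 2 = bT y (bA z) z ^ 2 := by
    have := bA_sq z
    have := bA_sq (bX y (bA z) z)
    linarith
  exact (pow_left_inj₀ (bA_pos _).le h0 two_ne_zero).1 h2

lemma bPsi_smul (y x : E) {r : ℝ} (hr : 0 ≤ r) : bPsi y (r • x) = r • bPsi y x := by
  simp only [bPsi, bX, norm_smul, inner_smul_right, Real.norm_of_nonneg hr, smul_add, smul_smul]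
  congr 2
  ring

lemma bPsi_continuous (y : E) : Continuous (bPsi y) := by
  unfold bPsi bX; fun_prop

lemma bPsi_ne_zero (y : E) {x : E} (hx : x ≠ 0) : bPsi y x ≠ 0 := by
  rw [← norm_pos_iff, norm_bPsi]; exact bT_norm_pos y hx

lemma bPsi_hasFDerivAt (y : E) {x : E} (hx : x ≠ 0) :
    HasFDerivAt (bPsi y) (ContinuousLinearMap.id ℝ E +
      ((‖x‖⁻¹ • innerSL ℝ x) + (1 + bA y)⁻¹ • innerSL ℝ y).smulRight y) x := by
  have hn : HasFDerivAt (fun x : E => ‖x‖) (‖x‖⁻¹ • innerSL ℝ x) x := by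
    have h1 := (hasStrictFDerivAt_norm_sq x).hasFDerivAt.sqrt (by simpa using hx)
    simp only [Real.sqrt_sq (norm_nonneg _)] at h1
    convert h1 using 1
    ext v
    simp
    ring
  have h2 : HasFDerivAt (fun x : E => inner ℝ y x / (1 + bA y)) ((1 + bA y)⁻¹ • innerSL ℝ y) x := by
    have := ((innerSL ℝ y).hasFDerivAt (x := x)).const_smul ((1 + bA y)⁻¹)
    refine this.congr_of_eventuallyEq (Filter.Eventually.of_forall fun v => ?_)
    simp [div_eq_inv_mul]
  exact (hasFDerivAt_id x).add ((hn.add h2).smul_const y)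

lemma bPsi_det [FiniteDimensional ℝ E] (y : E) {x : E} (hx : x ≠ 0) :
    (ContinuousLinearMap.id ℝ E +
      ((‖x‖⁻¹ • innerSL ℝ x) + (1 + bA y)⁻¹ • innerSL ℝ y).smulRight y).det
     = bT y ‖x‖ x / ‖x‖ := by
  set f := (‖x‖⁻¹ • innerSL ℝ x) + (1 + bA y)⁻¹ • innerSL ℝ y
  have : ((ContinuousLinearMap.id ℝ E + f.smulRight y : E →L[ℝ] E) : E →ₗ[ℝ] E)
      = LinearMap.transvection (f : E →ₗ[ℝ] ℝ) y := by
    ext v; simp [LinearMap.transvection]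
  rw [ContinuousLinearMap.det, this, LinearMap.transvection.det]
  have h1 : 1 + bA y ≠ 0 := by have := bA_pos y; positivity
  have h3 := norm_ne_zero_iff.2 hx
  have h := bA_sq y
  simp [f, bT, real_inner_self_eq_norm_sq]
  rw [show ‖y‖ ^ 2 = bA y ^ 2 - 1 by linarith, real_inner_comm]
  field_simp
  ring
end Boost

section CV
variable {E : Type*} [NormedAddCommGroup E] [InnerProductSpace ℝ E] 

/-- conformal factor -/
noncomputable def bW (y : E) (ξ : sphere (0 : E) 1) : ℝ := bT y 1 (ξ : E)

lemma sph_norm (ξ : sphere (0 : E) 1) : ‖(ξ : E)‖ = 1 := by simp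

lemma sph_ne (ξ : sphere (0 : E) 1) : (ξ : E) ≠ 0 := by
  intro h; have := sph_norm ξ; simp [h] at this

lemma bW_eq (y : E) (ξ : sphere (0 : E) 1) : bW y ξ = bT y ‖(ξ : E)‖ (ξ : E) := by
  rw [sph_norm, bW]

lemma bW_pos (y : E) (ξ : sphere (0 : E) 1) : 0 < bW y ξ := by
  rw [bW_eq]; exact bT_norm_pos y (sph_ne ξ)

/-- conformal map of the sphere -/
noncomputable def bPhi (y : E) (ξ : sphere (0 : E) 1) : sphere (0 : E) 1 :=
  ⟨(bW y ξ)⁻¹ • bPsi y ξ, by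
    rw [mem_sphere_zero_iff_norm, norm_smul, norm_bPsi, ← bW_eq, norm_inv,
      Real.norm_of_nonneg (bW_pos y ξ).le, inv_mul_cancel₀ (bW_pos y ξ).ne']⟩

lemma bW_smul_bPhi (y : E) (ξ : sphere (0 : E) 1) : bW y ξ • (bPhi y ξ : E) = bPsi y ξ := by
  simp [bPhi, smul_smul, (bW_pos y ξ).ne']

lemma bW_continuous (y : E) : Continuous (bW y) := by
  unfold bW bT; fun_prop

lemma bPhi_continuous (y : E) : Continuous (bPhi y) := by
  unfold bPhi
  refine Continuous.subtype_mk ?_ _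
  exact ((bW_continuous y).inv₀ fun ξ => (bW_pos y ξ).ne').smul
    ((bPsi_continuous y).comp continuous_subtype_val)

variable [FiniteDimensional ℝ E] [MeasurableSpace E] [BorelSpace E] [Nontrivial E]
variable (μ : Measure E) [μ.IsAddHaarMeasure]

lemma lintegral_polar (H : E → ℝ≥0∞) (hH : Measurable H) :
    ∫⁻ x in {(0 : E)}ᶜ, H x ∂μ = ∫⁻ θ, ∫⁻ r, H ((r : ℝ) • (θ : E))
      ∂(Measure.volumeIoiPow (Module.finrank ℝ E - 1)) ∂μ.toSphere := by
  rw [← lintegral_subtype_comap (measurableSet_singleton (0 : E)).compl]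
  have h := μ.measurePreserving_homeomorphUnitSphereProd.lintegral_comp_emb
    (Homeomorph.measurableEmbedding _) (fun z => H ((z.2 : ℝ) • (z.1 : E)))
  rw [lintegral_prod] at h
  · rw [← h]
    refine lintegral_congr fun x => ?_
    congr 1
    rw [← homeomorphUnitSphereProd_symm_apply_coe, Homeomorph.symm_apply_apply]
  · refine (hH.comp ?_).aemeasurable
    fun_prop

lemma boost_image (y : E) : bPsi y '' {(0 : E)}ᶜ = {(0 : E)}ᶜ := by
  ext x
  constructor
  · rintro ⟨z, hz, rfl⟩
    exact bPsi_ne_zero y hz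
  · intro hx
    refine ⟨bPsi (-y) x, bPsi_ne_zero _ hx, ?_⟩
    have := bPsi_neg_bPsi (-y) x
    rwa [neg_neg] at this

lemma sphere_cv (y : E) (g : sphere (0 : E) 1 → ℝ≥0∞) (hg : Measurable g) :
    ∫⁻ θ, g (bPhi y θ) * ENNReal.ofReal (bW y θ ^ (-(Module.finrank ℝ E - 1 : ℝ))) ∂μ.toSphere
      = ∫⁻ θ, g θ ∂μ.toSphere := by
  set d := Module.finrank ℝ E - 1 with hd
  have hdim : Module.finrank ℝ E = d + 1 := by
    have := Module.finrank_pos (R := ℝ) (M := E); omega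
  set K : sphere (0 : E) 1 × Set.Ioi (0 : ℝ) → ℝ≥0∞ := fun z =>
    g z.1 * (Set.Iio ⟨1, Set.mem_Ioi.2 one_pos⟩ : Set (Set.Ioi (0 : ℝ))).indicator 1 z.2 with hK
  have hKm : Measurable K :=
    (hg.comp measurable_fst).mul ((measurable_one.indicator measurableSet_Iio).comp measurable_snd)
  set H : E → ℝ≥0∞ := Function.extend (Subtype.val : ({(0 : E)}ᶜ : Set E) → E)
    (K ∘ homeomorphUnitSphereProd E) 0 with hHdef
  have hHm : Measurable H :=
    (MeasurableEmbedding.subtype_coe (measurableSet_singleton _).compl).measurable_extend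
      (hKm.comp (homeomorphUnitSphereProd E).measurable) measurable_zero
  have hHv : ∀ (θ : sphere (0 : E) 1) (r : Set.Ioi (0 : ℝ)), H ((r : ℝ) • (θ : E)) = K (θ, r) := by
    intro θ r
    have h1 : ((homeomorphUnitSphereProd E).symm (θ, r) : E) = (r : ℝ) • (θ : E) := by simp
    rw [← h1, hHdef, Subtype.val_injective.extend_apply]
    simp
  have h1 := lintegral_polar μ H hHm
  have h2 := lintegral_image_eq_lintegral_abs_det_fderiv_mul μ
    (measurableSet_singleton (0 : E)).compl (f := bPsi y)
    (fun x hx => (bPsi_hasFDerivAt y hx).hasFDerivWithinAt)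
    (fun a _ b _ hab => by
      have := congrArg (bPsi (-y)) hab
      simpa [bPsi_neg_bPsi] using this) H
  rw [boost_image, h1] at h2
  have h3 : ∫⁻ x in {(0 : E)}ᶜ, ENNReal.ofReal |(ContinuousLinearMap.id ℝ E +
      ((‖x‖⁻¹ • innerSL ℝ x) + (1 + bA y)⁻¹ • innerSL ℝ y).smulRight y).det| * H (bPsi y x) ∂μ
      = ∫⁻ x in {(0 : E)}ᶜ, ENNReal.ofReal (bT y ‖x‖ x / ‖x‖) * H (bPsi y x) ∂μ := by
    refine setLIntegral_congr_fun (measurableSet_singleton (0 : E)).compl fun x hx => ?_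
    have := bT_norm_pos y hx
    have h' : 0 < ‖x‖ := norm_pos_iff.2 hx
    simp only [bPsi_det y hx]
    rw [abs_of_pos (by positivity)]
  rw [h3, lintegral_polar μ _ (by
    have : Measurable (bPsi y) := (bPsi_continuous y).measurable
    have h' : Measurable fun x : E => bT y ‖x‖ x := by
      have : Continuous fun x : E => bT y ‖x‖ x := by unfold bT; fun_prop
      exact this.measurable
    exact (ENNReal.measurable_ofReal.comp (h'.div measurable_norm)).mul (hHm.comp this))] at h2
  simp only [hHv, hK] at h2
  have hL : ∀ θ, ∫⁻ r, g θ * (Set.Iio ⟨1, Set.mem_Ioi.2 one_pos⟩ :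
      Set (Set.Ioi (0 : ℝ))).indicator 1 r ∂Measure.volumeIoiPow d
      = g θ * ENNReal.ofReal (1 / (d + 1)) := by
    intro θ
    rw [lintegral_const_mul _ (measurable_one.indicator measurableSet_Iio),
      lintegral_indicator_one measurableSet_Iio, Measure.volumeIoiPow_apply_Iio]
    simp
  have hR : ∀ θ : sphere (0 : E) 1, ∫⁻ r : Set.Ioi (0 : ℝ),
      ENNReal.ofReal (bT y ‖(r : ℝ) • (θ : E)‖ ((r : ℝ) • (θ : E)) / ‖(r : ℝ) • (θ : E)‖)
        * H (bPsi y ((r : ℝ) • (θ : E))) ∂Measure.volumeIoiPow d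
      = (g (bPhi y θ) * ENNReal.ofReal (bW y θ ^ (-(Module.finrank ℝ E - 1 : ℝ))))
        * ENNReal.ofReal (1 / (d + 1)) := by
    intro θ
    have hw := bW_pos y θ
    have e1 : ∀ r : Set.Ioi (0 : ℝ),
        ENNReal.ofReal (bT y ‖(r : ℝ) • (θ : E)‖ ((r : ℝ) • (θ : E)) / ‖(r : ℝ) • (θ : E)‖)
        * H (bPsi y ((r : ℝ) • (θ : E))) = (ENNReal.ofReal (bW y θ) * g (bPhi y θ)) *
        (Set.Iio ⟨(bW y θ)⁻¹, Set.mem_Ioi.2 (inv_pos.2 hw)⟩ : Set (Set.Ioi (0 : ℝ))).indicator 1 r := by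
      intro r
      have hr : (0 : ℝ) < r := r.2
      have a1 : bT y ‖(r : ℝ) • (θ : E)‖ ((r : ℝ) • (θ : E)) / ‖(r : ℝ) • (θ : E)‖ = bW y θ := by
        rw [norm_smul, sph_norm, Real.norm_of_nonneg hr.le, bT, bW, bT, inner_smul_right]
        field_simp
      have a2 : bPsi y ((r : ℝ) • (θ : E)) =
          ((⟨r * bW y θ, Set.mem_Ioi.2 (mul_pos hr hw)⟩ : Set.Ioi (0 : ℝ)) : ℝ) • (bPhi y θ : E) := by
        rw [bPsi_smul _ _ hr.le, ← bW_smul_bPhi, smul_smul]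
      rw [a1, a2, hHv, hK, mul_assoc]
      congr 2
      simp only [Set.indicator, Set.mem_Iio, ← Subtype.coe_lt_coe]
      have hiff : (r : ℝ) * bW y θ < 1 ↔ (r : ℝ) < (bW y θ)⁻¹ := by
        rw [← one_div, lt_div_iff₀ hw]
      simp only [hiff, Pi.one_apply]
    simp only [e1]
    rw [lintegral_const_mul _ (measurable_one.indicator measurableSet_Iio),
      lintegral_indicator_one measurableSet_Iio, Measure.volumeIoiPow_apply_Iio]
    rw [mul_comm (ENNReal.ofReal (bW y θ)), mul_assoc, mul_assoc, ← ENNReal.ofReal_mul hw.le,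
      ← ENNReal.ofReal_mul (by positivity)]
    congr 2
    rw [hdim]
    push_cast
    rw [add_sub_cancel_right, Real.rpow_neg hw.le, Real.rpow_natCast, inv_pow, pow_succ]
    field_simp
  have hL' := lintegral_congr (μ := μ.toSphere) hL
  have hR' := lintegral_congr (μ := μ.toSphere) hR
  rw [← hd, hL', hR'] at h2
  have hc0 : ENNReal.ofReal (1 / ((d : ℝ) + 1)) ≠ 0 := by
    rw [Ne, ENNReal.ofReal_eq_zero, not_le]; positivity
  rw [lintegral_mul_const' _ _ ENNReal.ofReal_ne_top,
    lintegral_mul_const' _ _ ENNReal.ofReal_ne_top] at h2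
  exact ((ENNReal.mul_left_inj hc0 ENNReal.ofReal_ne_top).1 h2).symm
end CV

/-- The unit sphere. -/
abbrev Sph (n : ℕ) := sphere (0 : EuclideanSpace ℝ (Fin (n + 1))) 1

section Conf
variable {n : ℕ} {l : ℝ}

instance (n : ℕ) : IsFiniteMeasure (sphereMeasure n) := by
  unfold sphereMeasure; infer_instance

/-- kernel -/
noncomputable def kern (l : ℝ) (ξ η : Sph n) : ℝ≥0∞ :=
  ENNReal.ofReal (dist (ξ : EuclideanSpace ℝ (Fin (n + 1))) η ^ l)

/-- operator on extended nonnegative functions -/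
noncomputable def TT (l : ℝ) (F : Sph n → ℝ≥0∞) (ξ : Sph n) : ℝ≥0∞ :=
  ∫⁻ η, F η * kern l ξ η ∂(sphereMeasure n)

/-- Hyperbolic kernel -/
noncomputable def hker (z : EuclideanSpace ℝ (Fin (n + 1))) (ξ : Sph n) : ℝ :=
  bA z - inner ℝ (ξ : EuclideanSpace ℝ (Fin (n + 1))) z

/-- Hyperbolic extension -/
noncomputable def HH (l : ℝ) (F : Sph n → ℝ≥0∞) (z : EuclideanSpace ℝ (Fin (n + 1))) : ℝ≥0∞ :=
  ∫⁻ ξ, F ξ * ENNReal.ofReal (hker z ξ ^ (l / 2)) ∂(sphereMeasure n)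

/-- Conformal action -/
noncomputable def cf (l : ℝ) (y : EuclideanSpace ℝ (Fin (n + 1))) (F : Sph n → ℝ≥0∞) (ξ : Sph n) :
    ℝ≥0∞ :=
  F (bPhi y ξ) * ENNReal.ofReal (bW y ξ ^ (-((n : ℝ) + l / 2)))

lemma bX_one (y : EuclideanSpace ℝ (Fin (n + 1))) (ξ : Sph n) :
    bX y 1 (ξ : EuclideanSpace ℝ (Fin (n + 1))) = bW y ξ • (bPhi y ξ : EuclideanSpace ℝ _) := by
  rw [bW_smul_bPhi, bPsi, sph_norm]

lemma dist_sq_sph (ξ η : Sph n) : dist (ξ : EuclideanSpace ℝ (Fin (n + 1))) η ^ 2 =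
    2 - 2 * inner ℝ (ξ : EuclideanSpace ℝ (Fin (n + 1))) η := by
  rw [dist_eq_norm, norm_sub_sq_real, sph_norm, sph_norm]; ring

lemma dist_sq_bPhi (y : EuclideanSpace ℝ (Fin (n + 1))) (ξ η : Sph n) :
    dist (ξ : EuclideanSpace ℝ (Fin (n + 1))) η ^ 2 =
      dist (bPhi y ξ : EuclideanSpace ℝ (Fin (n + 1))) (bPhi y η) ^ 2 * (bW y ξ * bW y η) := by
  rw [dist_sq_sph, dist_sq_sph]
  have h := boost_form y 1 1 (ξ : EuclideanSpace ℝ (Fin (n + 1))) η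
  rw [bX_one, bX_one, inner_smul_left, inner_smul_right] at h
  change bW y ξ * bW y η - _ = _ at h
  simp only [RCLike.conj_to_real] at h
  linarith

lemma dist_rpow_bPhi (y : EuclideanSpace ℝ (Fin (n + 1))) (ξ η : Sph n) :
    dist (ξ : EuclideanSpace ℝ (Fin (n + 1))) η ^ l =
      dist (bPhi y ξ : EuclideanSpace ℝ (Fin (n + 1))) (bPhi y η) ^ l *
        (bW y ξ ^ (l / 2) * bW y η ^ (l / 2)) := by
  have e : ∀ d : ℝ, 0 ≤ d → d ^ l = (d ^ 2) ^ (l / 2) := by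
    intro d hd
    rw [← Real.rpow_natCast, ← Real.rpow_mul hd]
    congr 1; push_cast; ring
  have h1 := (bW_pos y ξ).le
  have h2 := (bW_pos y η).le
  rw [e _ dist_nonneg, e _ dist_nonneg, dist_sq_bPhi y, Real.mul_rpow (by positivity) (by positivity),
    Real.mul_rpow h1 h2]

lemma hker_pos (z : EuclideanSpace ℝ (Fin (n + 1))) (ξ : Sph n) : 0 < hker z ξ := by
  have h1 := abs_le.1 (abs_real_inner_le_norm (ξ : EuclideanSpace ℝ (Fin (n + 1))) z)
  rw [sph_norm] at h1
  have := norm_lt_bA z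
  unfold hker; linarith

lemma hker_bPhi (y z : EuclideanSpace ℝ (Fin (n + 1))) (ξ : Sph n) :
    hker z ξ = bW y ξ * hker (bX y (bA z) z) (bPhi y ξ) := by
  have h := boost_form y 1 (bA z) (ξ : EuclideanSpace ℝ (Fin (n + 1))) z
  rw [bX_one, inner_smul_left, ← bA_bX] at h
  simp only [RCLike.conj_to_real] at h
  change bW y ξ * _ - _ = _ at h
  unfold hker
  linarith

lemma sphere_cv' (y : EuclideanSpace ℝ (Fin (n + 1))) (g : Sph n → ℝ≥0∞) (hg : Measurable g) :
    ∫⁻ θ, g (bPhi y θ) * ENNReal.ofReal (bW y θ ^ (-(n : ℝ))) ∂(sphereMeasure n)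
      = ∫⁻ θ, g θ ∂(sphereMeasure n) := by
  have := sphere_cv (volume : Measure (EuclideanSpace ℝ (Fin (n + 1)))) y g hg
  rw [finrank_euclideanSpace_fin] at this
  push_cast at this
  rw [add_sub_cancel_right] at this
  exact this

lemma bPhi_measurable (y : EuclideanSpace ℝ (Fin (n + 1))) : Measurable (bPhi (E := EuclideanSpace ℝ (Fin (n + 1))) y) :=
  (bPhi_continuous y).measurable

lemma bW_measurable (y : EuclideanSpace ℝ (Fin (n + 1))) : Measurable (bW (E := EuclideanSpace ℝ (Fin (n + 1))) y) :=
  (bW_continuous y).measurable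

lemma cf_measurable (y : EuclideanSpace ℝ (Fin (n + 1))) {F : Sph n → ℝ≥0∞} (hF : Measurable F) :
    Measurable (cf l y F) :=
  (hF.comp (bPhi_measurable y)).mul ((bW_measurable y).pow_const _).ennreal_ofReal

lemma kern_measurable2 : Measurable (fun z : Sph n × Sph n => kern l z.1 z.2) := by
  unfold kern
  have : Measurable (fun z : Sph n × Sph n => dist (z.1 : EuclideanSpace ℝ (Fin (n + 1))) z.2) := by
    have : Continuous (fun z : Sph n × Sph n => dist (z.1 : EuclideanSpace ℝ (Fin (n + 1))) z.2) := by
      fun_prop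
    exact this.measurable
  exact (this.pow_const _).ennreal_ofReal

lemma kern_measurable (ξ : Sph n) : Measurable (kern l ξ) := by
  have h : Measurable (fun η : Sph n => (ξ, η)) := measurable_prodMk_left
  have h2 := (kern_measurable2 (n := n) (l := l)).comp h
  exact h2

lemma kern_comm (ξ η : Sph n) : kern l ξ η = kern l η ξ := by
  unfold kern; rw [dist_comm]

lemma TT_measurable {F : Sph n → ℝ≥0∞} (hF : Measurable F) : Measurable (TT l F) := by
  unfold TT
  exact Measurable.lintegral_prod_right ((hF.comp measurable_snd).mul kern_measurable2)

lemma hker_continuous (z : EuclideanSpace ℝ (Fin (n + 1))) : Continuous (hker (n := n) z) := by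
  unfold hker; fun_prop

lemma ofReal_rpow_mul {w : ℝ} (hw : 0 < w) (a b : ℝ) :
    ENNReal.ofReal (w ^ a) * ENNReal.ofReal (w ^ b) = ENNReal.ofReal (w ^ (a + b)) := by
  rw [← ENNReal.ofReal_mul (by positivity), Real.rpow_add hw]

lemma TT_cf (y : EuclideanSpace ℝ (Fin (n + 1))) {F : Sph n → ℝ≥0∞} (hF : Measurable F) (ξ : Sph n) :
    TT l (cf l y F) ξ = ENNReal.ofReal (bW y ξ ^ (l / 2)) * TT l F (bPhi y ξ) := by
  have h := sphere_cv' y (fun η => F η * kern l (bPhi y ξ) η) (hF.mul (kern_measurable _))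
  unfold TT
  rw [← h, ← lintegral_const_mul' _ _ ENNReal.ofReal_ne_top]
  refine lintegral_congr fun η => ?_
  have hw := bW_pos y η
  have hw' := bW_pos y ξ
  have : kern l ξ η = kern l (bPhi y ξ) (bPhi y η) *
      (ENNReal.ofReal (bW y ξ ^ (l / 2)) * ENNReal.ofReal (bW y η ^ (l / 2))) := by
    unfold kern
    rw [dist_rpow_bPhi y, ENNReal.ofReal_mul (by positivity), ENNReal.ofReal_mul (by positivity)]
  rw [this, cf]
  have e : ENNReal.ofReal (bW y η ^ (-(n : ℝ))) = ENNReal.ofReal (bW y η ^ (-((n : ℝ) + l / 2)))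
      * ENNReal.ofReal (bW y η ^ (l / 2)) := by
    rw [ofReal_rpow_mul hw]; congr 2; ring
  rw [e]
  ring

lemma HH_cf (y z : EuclideanSpace ℝ (Fin (n + 1))) {F : Sph n → ℝ≥0∞} (hF : Measurable F) :
    HH l (cf l y F) z = HH l F (bX y (bA z) z) := by
  have h := sphere_cv' y (fun η => F η * ENNReal.ofReal (hker (bX y (bA z) z) η ^ (l / 2)))
    (hF.mul (((hker_continuous _).measurable.pow_const _).ennreal_ofReal))
  unfold HH
  rw [← h]
  refine lintegral_congr fun η => ?_
  have hw := bW_pos y η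
  have hk := hker_pos (bX y (bA z) z) (bPhi y η)
  rw [hker_bPhi y z, cf, Real.mul_rpow hw.le hk.le, ENNReal.ofReal_mul (by positivity)]
  have e : ENNReal.ofReal (bW y η ^ (-(n : ℝ))) = ENNReal.ofReal (bW y η ^ (-((n : ℝ) + l / 2)))
      * ENNReal.ofReal (bW y η ^ (l / 2)) := by
    rw [ofReal_rpow_mul hw]; congr 2; ring
  rw [e]
  ring

lemma HH_zero (F : Sph n → ℝ≥0∞) : HH l F 0 = ∫⁻ ξ, F ξ ∂(sphereMeasure n) := by
  simp [HH, hker, bA_zero]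

lemma lintegral_cf (y : EuclideanSpace ℝ (Fin (n + 1))) {F : Sph n → ℝ≥0∞} (hF : Measurable F) :
    ∫⁻ ξ, cf l y F ξ ∂(sphereMeasure n) = HH l F y := by
  rw [← HH_zero (l := l), HH_cf y 0 hF]
  congr 1
  simp [bX, bA_zero]

lemma ennreal_mul_rpow {a b : ℝ≥0∞} (ha : a ≠ 0) (ha' : a ≠ ⊤) (z : ℝ) :
    (a * b) ^ z = a ^ z * b ^ z := by
  rw [ENNReal.mul_rpow_eq_ite, if_neg]
  simp [ha, ha']

lemma lintegral_cf_rpow {p : ℝ} (hp : p * (n + l / 2) = n) (y : EuclideanSpace ℝ (Fin (n + 1)))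
    {F : Sph n → ℝ≥0∞} (hF : Measurable F) :
    ∫⁻ ξ, cf l y F ξ ^ p ∂(sphereMeasure n) = ∫⁻ ξ, F ξ ^ p ∂(sphereMeasure n) := by
  rw [← sphere_cv' y (fun ξ => F ξ ^ p) (hF.pow_const _)]
  refine lintegral_congr fun η => ?_
  have hw := bW_pos y η
  rw [cf, mul_comm, ennreal_mul_rpow (by simp; positivity) ENNReal.ofReal_ne_top, mul_comm,
    ENNReal.ofReal_rpow_of_pos (by positivity), ← Real.rpow_mul hw.le]
  congr 3
  linarith

lemma lintegral_TT_cf_rpow {q : ℝ} (hq : q * (l / 2) = -n) (y : EuclideanSpace ℝ (Fin (n + 1)))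
    {F : Sph n → ℝ≥0∞} (hF : Measurable F) :
    ∫⁻ ξ, TT l (cf l y F) ξ ^ q ∂(sphereMeasure n) = ∫⁻ ξ, TT l F ξ ^ q ∂(sphereMeasure n) := by
  rw [← sphere_cv' y (fun ξ => TT l F ξ ^ q) ((TT_measurable hF).pow_const _)]
  refine lintegral_congr fun η => ?_
  have hw := bW_pos y η
  rw [TT_cf y hF, ennreal_mul_rpow (by simp; positivity) ENNReal.ofReal_ne_top, mul_comm,
    ENNReal.ofReal_rpow_of_pos (by positivity), ← Real.rpow_mul hw.le]
  congr 3
  linarith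

end Conf

section Ana
variable {n : ℕ} {l : ℝ}

lemma sph_nonempty (n : ℕ) : Nonempty (Sph n) :=
  (NormedSpace.sphere_nonempty.2 zero_le_one : (sphere (0 : EuclideanSpace ℝ (Fin (n + 1))) 1).Nonempty).to_subtype

lemma sph_singleton (hn : 1 ≤ n) (ξ : Sph n) : sphereMeasure n {ξ} = 0 := by
  unfold sphereMeasure
  rw [Measure.toSphere_apply' _ (measurableSet_singleton _)]
  have h : volume (Submodule.span ℝ {(ξ : EuclideanSpace ℝ (Fin (n + 1)))} :
      Set (EuclideanSpace ℝ (Fin (n + 1)))) = 0 := by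
    refine Measure.addHaar_submodule _ _ ?_
    intro h
    have h1 := finrank_span_singleton (K := ℝ) (sph_ne ξ)
    rw [h, finrank_top, finrank_euclideanSpace_fin] at h1
    omega
  rw [measure_mono_null _ h, mul_zero]
  rintro x ⟨r, _, v, ⟨w, hw, rfl⟩, rfl⟩
  rw [Set.mem_singleton_iff.1 hw]
  exact Submodule.smul_mem _ _ (Submodule.mem_span_singleton_self _)

lemma dist_le_two (ξ η : Sph n) : dist (ξ : EuclideanSpace ℝ (Fin (n + 1))) η ≤ 2 := by
  rw [dist_eq_norm]
  have := norm_sub_le (ξ : EuclideanSpace ℝ (Fin (n + 1))) η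
  rw [sph_norm, sph_norm] at this
  linarith

lemma kern_le (hl : 0 < l) (ξ η : Sph n) : kern l ξ η ≤ ENNReal.ofReal (2 ^ l) :=
  ENNReal.ofReal_le_ofReal (Real.rpow_le_rpow dist_nonneg (dist_le_two ξ η) hl.le)

lemma TT_le (hl : 0 < l) (F : Sph n → ℝ≥0∞) (ξ : Sph n) :
    TT l F ξ ≤ ENNReal.ofReal (2 ^ l) * ∫⁻ η, F η ∂(sphereMeasure n) := by
  rw [← lintegral_const_mul' _ _ ENNReal.ofReal_ne_top]
  refine lintegral_mono fun η => ?_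
  rw [mul_comm]
  gcongr
  exact kern_le hl ξ η

lemma rdist_continuous (hl : 0 < l) : Continuous (fun z : Sph n × Sph n =>
    dist (z.1 : EuclideanSpace ℝ (Fin (n + 1))) z.2 ^ l) := by
  have : Continuous (fun z : Sph n × Sph n => dist (z.1 : EuclideanSpace ℝ (Fin (n + 1))) z.2) := by
      fun_prop
  exact this.rpow_const fun _ => Or.inr hl.le

lemma kern_continuous (hl : 0 < l) (η : Sph n) : Continuous (fun ξ => kern l ξ η) := by
  unfold kern
  have h : Continuous (fun ξ : Sph n => (ξ, η)) := by fun_prop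
  have h2 := (rdist_continuous (n := n) hl).comp h
  have h3 := ENNReal.continuous_ofReal.comp h2
  exact h3

lemma TT_continuous (hl : 0 < l) {F : Sph n → ℝ≥0∞} (hF : Measurable F)
    (hfin : ∫⁻ η, F η ∂(sphereMeasure n) ≠ ⊤) : Continuous (TT l F) := by
  rw [continuous_iff_continuousAt]
  intro ξ
  refine tendsto_lintegral_filter_of_dominated_convergence (fun η => F η * ENNReal.ofReal (2 ^ l))
    ?_ ?_ ?_ ?_
  · exact Filter.Eventually.of_forall fun ξ => hF.mul (kern_measurable ξ)
  · refine Filter.Eventually.of_forall fun ξ => Filter.Eventually.of_forall fun η => ?_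
    gcongr
    exact kern_le hl ξ η
  · rw [lintegral_mul_const' _ _ ENNReal.ofReal_ne_top]
    exact ENNReal.mul_ne_top hfin ENNReal.ofReal_ne_top
  · filter_upwards [ae_lt_top hF hfin] with η hη
    exact ENNReal.Tendsto.const_mul ((kern_continuous hl η).tendsto ξ) (Or.inr hη.ne)

lemma kern_pos {ξ η : Sph n} (h : ξ ≠ η) : 0 < kern l ξ η := by
  unfold kern
  rw [ENNReal.ofReal_pos]
  exact Real.rpow_pos_of_pos (dist_pos.2 fun h' => h (Subtype.ext h')) _

lemma TT_pos (hn : 1 ≤ n) {F : Sph n → ℝ≥0∞} (hF : Measurable F)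
    (h0 : ∫⁻ η, F η ∂(sphereMeasure n) ≠ 0) (ξ : Sph n) : TT l F ξ ≠ 0 := by
  intro h
  apply h0
  have hm : Measurable fun η => F η * kern l ξ η := hF.mul (kern_measurable ξ)
  rw [TT, lintegral_eq_zero_iff hm] at h
  rw [lintegral_eq_zero_iff hF]
  have h2 : ∀ᵐ η ∂(sphereMeasure n), η ≠ ξ := by
    rw [ae_iff]; simpa using sph_singleton hn ξ
  filter_upwards [h, h2] with η h3 h4
  exact (mul_eq_zero.1 h3).resolve_right (kern_pos h4.symm).ne'

lemma TT_lower (hn : 1 ≤ n) (hl : 0 < l) {F : Sph n → ℝ≥0∞} (hF : Measurable F)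
    (h0 : ∫⁻ η, F η ∂(sphereMeasure n) ≠ 0) (hfin : ∫⁻ η, F η ∂(sphereMeasure n) ≠ ⊤) :
    ∃ c : ℝ≥0∞, c ≠ 0 ∧ ∀ ξ, c ≤ TT l F ξ := by
  have := sph_nonempty n
  obtain ⟨x, -, hx⟩ := isCompact_univ.exists_isMinOn (Set.univ_nonempty (α := Sph n))
    (TT_continuous hl hF hfin).continuousOn
  exact ⟨TT l F x, TT_pos hn hF h0 x, fun ξ => hx (Set.mem_univ ξ)⟩

lemma hker_lower (z : EuclideanSpace ℝ (Fin (n + 1))) :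
    ∃ e : Sph n, ∀ ξ : Sph n,
      dist (e : EuclideanSpace ℝ (Fin (n + 1))) ξ ^ 2 / 8 ≤ hker z ξ := by
  obtain ⟨e, he⟩ : ∃ e : Sph n, z = ‖z‖ • (e : EuclideanSpace ℝ (Fin (n + 1))) := by
    by_cases hz : z = 0
    · obtain ⟨e⟩ := sph_nonempty n
      exact ⟨e, by simp [hz]⟩
    · refine ⟨⟨‖z‖⁻¹ • z, ?_⟩, ?_⟩
      · simp [norm_smul, hz]
      · simp [smul_smul, hz]
  refine ⟨e, fun ξ => ?_⟩
  rw [dist_sq_sph, hker]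
  have h1 := bA_sq z
  have h2 := bA_pos z
  have h3 := norm_nonneg z
  have h4 : inner ℝ (ξ : EuclideanSpace ℝ (Fin (n + 1))) z =
      ‖z‖ * inner ℝ (e : EuclideanSpace ℝ (Fin (n + 1))) ξ := by
    conv_lhs => rw [he]
    rw [inner_smul_right, real_inner_comm]
  rw [h4]
  have h5 := abs_le.1 (abs_real_inner_le_norm (e : EuclideanSpace ℝ (Fin (n + 1))) ξ)
  rw [sph_norm, sph_norm] at h5
  generalize inner ℝ (e : EuclideanSpace ℝ (Fin (n + 1))) (ξ : EuclideanSpace ℝ (Fin (n + 1))) = c at *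
  have h6 := norm_lt_bA z
  generalize ‖z‖ = t at *
  generalize bA z = A at *
  rcases le_total t (1 / 4) with h | h
  · have hA : 1 ≤ A := by nlinarith
    nlinarith
  · nlinarith

lemma rpow_two_half {d : ℝ} (hd : 0 ≤ d) : (d ^ 2) ^ (l / 2) = d ^ l := by
  rw [← Real.rpow_natCast, ← Real.rpow_mul hd]
  congr 1; push_cast; ring

lemma HH_lower (hl : 0 < l) (F : Sph n → ℝ≥0∞) (z : EuclideanSpace ℝ (Fin (n + 1))) :
    ∃ e : Sph n, ENNReal.ofReal ((1 / 8) ^ (l / 2)) * TT l F e ≤ HH l F z := by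
  obtain ⟨e, he⟩ := hker_lower z
  refine ⟨e, ?_⟩
  unfold TT HH
  rw [← lintegral_const_mul' _ _ ENNReal.ofReal_ne_top]
  refine lintegral_mono fun ξ => ?_
  rw [mul_left_comm]
  gcongr
  unfold kern
  rw [← ENNReal.ofReal_mul (by positivity), ← rpow_two_half dist_nonneg,
    ← Real.mul_rpow (by positivity) (by positivity)]
  refine ENNReal.ofReal_le_ofReal (Real.rpow_le_rpow (by positivity) ?_ (by positivity))
  have := he ξ
  linarith

lemma hker_upper (hl : 0 < l) (e ξ : Sph n) :
    hker ((3 / 4 : ℝ) • (e : EuclideanSpace ℝ (Fin (n + 1)))) ξ ^ (l / 2) ≤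
      (7 / 8) ^ (l / 2) + 2 ^ (l / 2) * dist (e : EuclideanSpace ℝ (Fin (n + 1))) ξ ^ l := by
  have h1 : bA ((3 / 4 : ℝ) • (e : EuclideanSpace ℝ (Fin (n + 1)))) = 5 / 4 := by
    rw [bA, norm_smul, sph_norm]
    rw [Real.sqrt_eq_iff_mul_self_eq (by positivity) (by positivity)]
    norm_num
  have h2 : hker ((3 / 4 : ℝ) • (e : EuclideanSpace ℝ (Fin (n + 1)))) ξ =
      1 / 2 + 3 / 8 * dist (e : EuclideanSpace ℝ (Fin (n + 1))) ξ ^ 2 := by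
    rw [hker, h1, dist_sq_sph, inner_smul_right, real_inner_comm]; ring
  have h3 := dist_le_two e ξ
  have h4 : 0 ≤ dist (e : EuclideanSpace ℝ (Fin (n + 1))) ξ := dist_nonneg
  rw [h2]
  generalize dist (e : EuclideanSpace ℝ (Fin (n + 1))) (ξ : EuclideanSpace ℝ (Fin (n + 1))) = d at *
  rcases le_total d 1 with h | h
  · have : (1 / 2 + 3 / 8 * d ^ 2) ^ (l / 2) ≤ (7 / 8 : ℝ) ^ (l / 2) :=
      Real.rpow_le_rpow (by positivity) (by nlinarith) (by positivity)
    have : 0 ≤ (2 : ℝ) ^ (l / 2) * d ^ l := by positivity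
    linarith
  · have a : (1 / 2 + 3 / 8 * d ^ 2) ^ (l / 2) ≤ (2 : ℝ) ^ (l / 2) :=
      Real.rpow_le_rpow (by positivity) (by nlinarith) (by positivity)
    have b : 1 ≤ d ^ l := Real.one_le_rpow h hl.le
    have c : 0 ≤ (2 : ℝ) ^ (l / 2) := by positivity
    have c' : 0 ≤ (7 / 8 : ℝ) ^ (l / 2) := by positivity
    nlinarith

lemma HH_upper (hl : 0 < l) {F : Sph n → ℝ≥0∞} (hF : Measurable F) (e : Sph n) :
    HH l F ((3 / 4 : ℝ) • (e : EuclideanSpace ℝ (Fin (n + 1)))) ≤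
      ENNReal.ofReal ((7 / 8) ^ (l / 2)) * ∫⁻ η, F η ∂(sphereMeasure n) +
      ENNReal.ofReal (2 ^ (l / 2)) * TT l F e := by
  unfold TT HH
  rw [← lintegral_const_mul' _ _ ENNReal.ofReal_ne_top,
    ← lintegral_const_mul' _ _ ENNReal.ofReal_ne_top,
    ← lintegral_add_left (hF.const_mul _)]
  refine lintegral_mono fun ξ => ?_
  have := ENNReal.ofReal_le_ofReal (hker_upper hl e ξ)
  rw [ENNReal.ofReal_add (by positivity) (by positivity), ENNReal.ofReal_mul (by positivity)] at this
  calc _ ≤ F ξ * (ENNReal.ofReal ((7 / 8) ^ (l / 2)) + ENNReal.ofReal (2 ^ (l / 2)) *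
        ENNReal.ofReal (dist (e : EuclideanSpace ℝ (Fin (n + 1))) ξ ^ l)) := by gcongr
    _ = _ := by simp only [kern]; ring

/-- lower constant -/
noncomputable def kap (l : ℝ) : ℝ := (1 - (7 / 8 : ℝ) ^ (l / 2)) / 2 / 2 ^ (l / 2)

lemma kap_pos (hl : 0 < l) : 0 < kap l := by
  have : (7 / 8 : ℝ) ^ (l / 2) < 1 := Real.rpow_lt_one (by norm_num) (by norm_num) (by positivity)
  unfold kap
  have : 0 < 1 - (7 / 8 : ℝ) ^ (l / 2) := by linarith
  positivity

lemma exists_balanced (hn : 1 ≤ n) (hl : 0 < l) {F : Sph n → ℝ≥0∞} (hF : Measurable F)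
    (h0 : ∫⁻ η, F η ∂(sphereMeasure n) ≠ 0) (hfin : ∫⁻ η, F η ∂(sphereMeasure n) ≠ ⊤) :
    ∃ y, HH l F y ≠ 0 ∧ HH l F y ≠ ⊤ ∧
      ∀ e, ENNReal.ofReal (kap l) * HH l F y ≤ TT l (cf l y F) e := by
  set c : ℝ := (7 / 8 : ℝ) ^ (l / 2) with hc
  have hc1 : c < 1 := Real.rpow_lt_one (by norm_num) (by norm_num) (by positivity)
  have hc0 : 0 < c := by positivity
  set I := ⨅ y, HH l F y with hI
  obtain ⟨c0, hc0', hT⟩ := TT_lower hn hl hF h0 hfin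
  have hI0 : I ≠ 0 := by
    have : ENNReal.ofReal ((1 / 8) ^ (l / 2)) * c0 ≤ I := by
      refine le_iInf fun y => ?_
      obtain ⟨e, he⟩ := HH_lower hl F y
      refine le_trans ?_ he
      gcongr
      exact hT e
    intro h
    rw [h, nonpos_iff_eq_zero, mul_eq_zero] at this
    rcases this with h | h
    · rw [ENNReal.ofReal_eq_zero] at h
      have : (0 : ℝ) < (1 / 8) ^ (l / 2) := by positivity
      linarith
    · exact hc0' h
  have hIt : I ≠ ⊤ := by
    have : I ≤ HH l F 0 := iInf_le _ _
    rw [HH_zero] at this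
    exact ne_top_of_le_ne_top hfin this
  set b : ℝ := (1 + c) / 2 with hb
  have hb1 : b < 1 := by rw [hb]; linarith
  have hb0 : 0 < b := by positivity
  obtain ⟨y, hy⟩ : ∃ y, HH l F y < I / ENNReal.ofReal b := by
    rw [← iInf_lt_iff, ← hI]
    rw [ENNReal.lt_div_iff_mul_lt (Or.inl (by simpa using hb0)) (Or.inl ENNReal.ofReal_ne_top)]
    calc I * ENNReal.ofReal b < I * 1 := by
          rw [ENNReal.mul_lt_mul_iff_right hI0 hIt]
          rwa [ENNReal.ofReal_lt_one]
      _ = I := mul_one _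
  refine ⟨y, ?_, hy.ne_top, fun e => ?_⟩
  · exact (lt_of_lt_of_le (pos_iff_ne_zero.2 hI0) (iInf_le _ _)).ne'
  have hyt := hy.ne_top
  have h1 : ENNReal.ofReal b * HH l F y ≤ I := by
    rw [mul_comm]
    refine (ENNReal.le_div_iff_mul_le (Or.inl (by simpa using hb0)) (Or.inl ENNReal.ofReal_ne_top)).1 hy.le
  have h2 := HH_upper hl (cf_measurable (l := l) y hF) e
  rw [HH_cf y _ hF, lintegral_cf y hF, ← hc] at h2
  have h3 : I ≤ _ := (iInf_le _ _).trans h2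
  have h4 := h1.trans h3
  have hcf : TT l (cf l y F) e ≠ ⊤ := by
    have := TT_le hl (cf l y F) e
    rw [lintegral_cf y hF] at this
    exact ne_top_of_le_ne_top (ENNReal.mul_ne_top ENNReal.ofReal_ne_top hyt) this
  rw [← ENNReal.ofReal_toReal hyt, ← ENNReal.ofReal_toReal hcf] at h4 ⊢
  have hm : 0 ≤ (HH l F y).toReal := ENNReal.toReal_nonneg
  have ht : 0 ≤ (TT l (cf l y F) e).toReal := ENNReal.toReal_nonneg
  generalize (HH l F y).toReal = m at *
  generalize (TT l (cf l y F) e).toReal = t at *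
  rw [← ENNReal.ofReal_mul hb0.le, ← ENNReal.ofReal_mul hc0.le, ← ENNReal.ofReal_mul (by positivity),
    ← ENNReal.ofReal_add (by positivity) (by positivity), ENNReal.ofReal_le_ofReal_iff (by positivity)] at h4
  rw [← ENNReal.ofReal_mul (kap_pos hl).le]
  refine ENNReal.ofReal_le_ofReal ?_
  rw [kap, ← hc, div_mul_eq_mul_div, div_le_iff₀ (by positivity)]
  rw [hb] at h4
  linarith

end Ana

section Var
variable {n : ℕ} {l : ℝ}

/-- compact class of functions -/
def GG (n : ℕ) (l : ℝ) : Set (BoundedContinuousFunction (Sph n) ℝ) :=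
  {G | (∀ ξ, G ξ ∈ Set.Icc (kap l) (2 ^ l)) ∧ ∀ (ξ ξ' : Sph n) (ε : ℝ),
    (∀ η : Sph n, |dist (ξ : EuclideanSpace ℝ (Fin (n + 1))) η ^ l -
      dist (ξ' : EuclideanSpace ℝ (Fin (n + 1))) η ^ l| ≤ ε) → |G ξ - G ξ'| ≤ ε}

lemma GG_closed : IsClosed (GG n l) := by
  have h1 : ∀ ξ : Sph n, Continuous fun G : BoundedContinuousFunction (Sph n) ℝ => G ξ :=
    fun ξ => (BoundedContinuousFunction.lipschitz_eval_const ξ).continuous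
  unfold GG
  rw [Set.ofPred_and]
  refine IsClosed.inter ?_ ?_
  · rw [Set.ofPred_forall]
    exact isClosed_iInter fun ξ => isClosed_Icc.preimage (h1 ξ)
  · simp only [Set.ofPred_forall]
    exact isClosed_iInter fun ξ => isClosed_iInter fun ξ' => isClosed_iInter fun ε =>
      isClosed_iInter fun _ => isClosed_le ((h1 ξ).sub (h1 ξ')).abs continuous_const

lemma GG_compact (hl : 0 < l) : IsCompact (GG n l) := by
  refine BoundedContinuousFunction.arzela_ascoli₂ (Set.Icc (kap l) (2 ^ l)) isCompact_Icc _ GG_closed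
    (fun f x hf => hf.1 x) ?_
  intro x
  rw [Metric.equicontinuousAt_iff_right]
  intro ε hε
  have hu := CompactSpace.uniformContinuous_of_continuous (rdist_continuous (n := n) hl)
  rw [Metric.uniformContinuous_iff] at hu
  obtain ⟨δ, hδ, h⟩ := hu (ε / 2) (by positivity)
  filter_upwards [Metric.ball_mem_nhds x hδ] with x' hx' G
  have h2 := G.2.2 x x' (ε / 2) (fun η => by
    have := h (a := (x, η)) (b := (x', η)) (by
      rw [Prod.dist_eq]
      simpa [dist_comm, hδ] using hx')
    rw [Real.dist_eq] at this
    exact this.le)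
  change dist (G.1 x) (G.1 x') < ε
  rw [Real.dist_eq]
  linarith

lemma kap_le (hl : 0 < l) : kap l ≤ 2 ^ l := by
  have h1 : (0 : ℝ) < (7 / 8) ^ (l / 2) := by positivity
  have h2 : (1 : ℝ) ≤ 2 ^ (l / 2) := Real.one_le_rpow (by norm_num) (by positivity)
  have h3 : (1 : ℝ) ≤ 2 ^ l := Real.one_le_rpow (by norm_num) (by positivity)
  have : kap l ≤ 1 := by
    unfold kap
    rw [div_le_one (by positivity)]
    linarith
  linarith

lemma GG_nonempty (hl : 0 < l) : (GG n l).Nonempty := by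
  refine ⟨BoundedContinuousFunction.const _ (kap l), fun ξ => ⟨le_rfl, kap_le hl⟩, ?_⟩
  intro ξ ξ' ε h
  have := (abs_nonneg _).trans (h ξ)
  simpa using this

lemma exists_GG (hl : 0 < l) {f : Sph n → ℝ≥0∞} (hf : Measurable f) {m : ℝ≥0∞}
    (hm : ∫⁻ η, f η ∂(sphereMeasure n) = m) (hm0 : m ≠ 0) (hmt : m ≠ ⊤)
    (hk : ∀ e, ENNReal.ofReal (kap l) * m ≤ TT l f e) :
    ∃ G ∈ GG n l, ∀ ξ, TT l f ξ = m * ENNReal.ofReal (G ξ) := by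
  have hT : ∀ ξ, TT l f ξ ≤ ENNReal.ofReal (2 ^ l) * m := fun ξ => hm ▸ TT_le hl f ξ
  have hTt : ∀ ξ, TT l f ξ ≠ ⊤ := fun ξ =>
    ne_top_of_le_ne_top (ENNReal.mul_ne_top ENNReal.ofReal_ne_top hmt) (hT ξ)
  have hcont : Continuous fun ξ => (TT l f ξ).toReal / m.toReal := by
    refine Continuous.div_const ?_ _
    rw [continuous_iff_continuousAt]
    intro ξ
    exact (ENNReal.tendsto_toReal (hTt ξ)).comp ((TT_continuous hl hf (hm ▸ hmt)).tendsto ξ)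
  have hmpos : 0 < m.toReal := ENNReal.toReal_pos hm0 hmt
  refine ⟨BoundedContinuousFunction.mkOfCompact ⟨_, hcont⟩, ⟨fun ξ => ?_, fun ξ ξ' ε h => ?_⟩,
    fun ξ => ?_⟩
  · simp only [BoundedContinuousFunction.mkOfCompact_apply, ContinuousMap.coe_mk]
    constructor
    · rw [le_div_iff₀ hmpos]
      have := ENNReal.toReal_mono (hTt ξ) (hk ξ)
      rwa [ENNReal.toReal_mul, ENNReal.toReal_ofReal (kap_pos hl).le] at this
    · rw [div_le_iff₀ hmpos]
      have := ENNReal.toReal_mono (ENNReal.mul_ne_top ENNReal.ofReal_ne_top hmt) (hT ξ)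
      rwa [ENNReal.toReal_mul, ENNReal.toReal_ofReal (by positivity)] at this
  · simp only [BoundedContinuousFunction.mkOfCompact_apply, ContinuousMap.coe_mk]
    have hε : 0 ≤ ε := (abs_nonneg _).trans (h ξ)
    have key : ∀ x x' : Sph n, (∀ η : Sph n, |dist (x : EuclideanSpace ℝ (Fin (n + 1))) η ^ l -
      dist (x' : EuclideanSpace ℝ (Fin (n + 1))) η ^ l| ≤ ε) →
        (TT l f x).toReal ≤ (TT l f x').toReal + ε * m.toReal := by
      intro x x' hx
      have h1 : TT l f x ≤ TT l f x' + ENNReal.ofReal ε * m := by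
        rw [← hm, ← lintegral_const_mul' _ _ ENNReal.ofReal_ne_top]
        unfold TT
        rw [← lintegral_add_right _ (hf.const_mul _)]
        refine lintegral_mono fun η => ?_
        have h2 : kern l x η ≤ kern l x' η + ENNReal.ofReal ε := by
          unfold kern
          rw [← ENNReal.ofReal_add (by positivity) hε]
          refine ENNReal.ofReal_le_ofReal ?_
          have := (abs_le.1 (hx η)).2
          linarith
        calc f η * kern l x η ≤ f η * (kern l x' η + ENNReal.ofReal ε) := by gcongr
          _ = _ := by ring
      have h3 : ENNReal.ofReal ε * m ≠ ⊤ := ENNReal.mul_ne_top ENNReal.ofReal_ne_top hmt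
      have h2 := ENNReal.toReal_mono (ENNReal.add_ne_top.2 ⟨hTt x', h3⟩) h1
      rwa [ENNReal.toReal_add (hTt x') h3, ENNReal.toReal_mul, ENNReal.toReal_ofReal hε] at h2
    have k1 := key ξ ξ' h
    have k2 := key ξ' ξ (fun η => by rw [abs_sub_comm]; exact h η)
    rw [← sub_div, abs_div, abs_of_pos hmpos, div_le_iff₀ hmpos, abs_le]
    constructor <;> linarith
  · simp only [BoundedContinuousFunction.mkOfCompact_apply, ContinuousMap.coe_mk]
    rw [ENNReal.ofReal_div_of_pos hmpos, ENNReal.ofReal_toReal (hTt ξ), ENNReal.ofReal_toReal hmt,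
      ENNReal.mul_div_cancel hm0 hmt]

lemma reverse_holder {p q : ℝ} (hp : 0 < p) (hp1 : p < 1) (hq : q = p / (p - 1))
    {f u : Sph n → ℝ≥0∞} (hf : Measurable f) (hu : Measurable u)
    (hf1 : ∫⁻ ξ, f ξ ^ p ∂(sphereMeasure n) = 1) (hu0 : ∀ ξ, u ξ ≠ 0) (hut : ∀ ξ, u ξ ≠ ⊤)
    (hB0 : ∫⁻ ξ, u ξ ^ q ∂(sphereMeasure n) ≠ 0) (hBt : ∫⁻ ξ, u ξ ^ q ∂(sphereMeasure n) ≠ ⊤) :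
    (∫⁻ ξ, u ξ ^ q ∂(sphereMeasure n)) ^ (1 / q) ≤ ∫⁻ ξ, f ξ * u ξ ∂(sphereMeasure n) := by
  have hp1' : 0 < 1 - p := by linarith
  have hc : (1 / p).HolderConjugate (1 / (1 - p)) := by
    rw [Real.holderConjugate_iff]
    refine ⟨?_, ?_⟩
    · rw [lt_div_iff₀ hp]; linarith
    · simp
  have h := ENNReal.lintegral_mul_le_Lp_mul_Lq (sphereMeasure n) hc
    (f := fun ξ => (f ξ * u ξ) ^ p) (g := fun ξ => u ξ ^ (-p))
    (((hf.mul hu).pow_const _).aemeasurable) ((hu.pow_const _).aemeasurable)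
  have e1 : ∫⁻ ξ, ((fun ξ => (f ξ * u ξ) ^ p) * fun ξ => u ξ ^ (-p)) ξ ∂(sphereMeasure n) = 1 := by
    rw [← hf1]
    refine lintegral_congr fun ξ => ?_
    simp only [Pi.mul_apply]
    rw [ENNReal.mul_rpow_of_nonneg _ _ hp.le, mul_assoc, ← ENNReal.rpow_add _ _ (hu0 ξ) (hut ξ)]
    simp
  have e2 : ∫⁻ ξ, (fun ξ => (f ξ * u ξ) ^ p) ξ ^ (1 / p) ∂(sphereMeasure n) =
      ∫⁻ ξ, f ξ * u ξ ∂(sphereMeasure n) := by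
    refine lintegral_congr fun ξ => ?_
    simp only
    rw [← ENNReal.rpow_mul, mul_one_div_cancel hp.ne', ENNReal.rpow_one]
  have e3 : ∫⁻ ξ, (fun ξ => u ξ ^ (-p)) ξ ^ (1 / (1 - p)) ∂(sphereMeasure n) =
      ∫⁻ ξ, u ξ ^ q ∂(sphereMeasure n) := by
    refine lintegral_congr fun ξ => ?_
    simp only
    rw [← ENNReal.rpow_mul, hq]
    congr 1
    have : p - 1 ≠ 0 := by linarith
    have : 1 - p ≠ 0 := hp1'.ne'
    field_simp
    ring
  rw [e1, e2, e3, one_div_one_div, one_div_one_div] at h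
  generalize (∫⁻ ξ, u ξ ^ q ∂(sphereMeasure n)) = B at *
  generalize (∫⁻ ξ, f ξ * u ξ ∂(sphereMeasure n)) = X at *
  have h2 := ENNReal.rpow_le_rpow h (show 0 ≤ 1 / p by positivity)
  rw [ENNReal.one_rpow, ENNReal.mul_rpow_of_nonneg _ _ (by positivity), ← ENNReal.rpow_mul,
    ← ENNReal.rpow_mul, mul_one_div_cancel hp.ne', ENNReal.rpow_one] at h2
  have e4 : (1 - p) * (1 / p) = -(1 / q) := by
    rw [hq]
    have : p - 1 ≠ 0 := by linarith
    field_simp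
    ring
  rw [e4] at h2
  calc B ^ (1 / q) = 1 * B ^ (1 / q) := (one_mul _).symm
    _ ≤ (X * B ^ (-(1 / q))) * B ^ (1 / q) := by gcongr
    _ = X := by rw [mul_assoc, ← ENNReal.rpow_add _ _ hB0 hBt]; simp

/-- dual function -/
noncomputable def gg (q : ℝ) (G : BoundedContinuousFunction (Sph n) ℝ) (ξ : Sph n) : ℝ≥0∞ :=
  ENNReal.ofReal (G ξ) ^ (q - 1)

/-- first integral -/
noncomputable def IA (q : ℝ) (G : BoundedContinuousFunction (Sph n) ℝ) : ℝ≥0∞ :=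
  ∫⁻ ξ, ENNReal.ofReal (G ξ) ^ q ∂(sphereMeasure n)

/-- second integral -/
noncomputable def IB (l q : ℝ) (G : BoundedContinuousFunction (Sph n) ℝ) : ℝ≥0∞ :=
  ∫⁻ ξ, TT l (gg q G) ξ ^ q ∂(sphereMeasure n)

lemma gg_measurable (q : ℝ) (G : BoundedContinuousFunction (Sph n) ℝ) : Measurable (gg q G) :=
  (G.continuous.measurable.ennreal_ofReal).pow_const _

lemma rpow_anti {a b : ℝ≥0∞} {r : ℝ} (hr : r ≤ 0) (h : a ≤ b) : b ^ r ≤ a ^ r := by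
  have h1 : a ^ (-r) ≤ b ^ (-r) := ENNReal.rpow_le_rpow h (by linarith)
  have h2 := ENNReal.inv_le_inv.2 h1
  rwa [← ENNReal.rpow_neg, ← ENNReal.rpow_neg, neg_neg] at h2

lemma rpow_bounds {a b x : ℝ≥0∞} {r : ℝ} (hr : r ≤ 0) (h1 : a ≤ x) (h2 : x ≤ b) :
    b ^ r ≤ x ^ r ∧ x ^ r ≤ a ^ r :=
  ⟨rpow_anti hr h2, rpow_anti hr h1⟩

lemma measure_ne_zero' : sphereMeasure n Set.univ ≠ 0 := by
  unfold sphereMeasure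
  rw [Ne, Measure.measure_univ_eq_zero]
  exact Measure.toSphere_ne_zero _

lemma lintegral_bounds {u : Sph n → ℝ≥0∞} {a b : ℝ≥0∞} (ha : a ≠ 0) (hb : b ≠ ⊤)
    (h1 : ∀ ξ, a ≤ u ξ) (h2 : ∀ ξ, u ξ ≤ b) :
    ∫⁻ ξ, u ξ ∂(sphereMeasure n) ≠ 0 ∧ ∫⁻ ξ, u ξ ∂(sphereMeasure n) ≠ ⊤ := by
  constructor
  · have := lintegral_mono (μ := sphereMeasure n) h1
    rw [lintegral_const] at this
    intro h
    rw [h, nonpos_iff_eq_zero, mul_eq_zero] at this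
    exact this.elim ha measure_ne_zero'
  · have := lintegral_mono (μ := sphereMeasure n) h2
    rw [lintegral_const] at this
    exact ne_top_of_le_ne_top (ENNReal.mul_ne_top hb (measure_ne_top _ _)) this

lemma rpow_ne {a : ℝ≥0∞} (h0 : a ≠ 0) (ht : a ≠ ⊤) (r : ℝ) : a ^ r ≠ 0 ∧ a ^ r ≠ ⊤ := by
  have := ENNReal.rpow_pos (pos_iff_ne_zero.2 h0) ht (p := r)
  exact ⟨this.ne', ENNReal.rpow_ne_top_of_ne_zero h0 ht⟩

/-- uniform bounds for the dual functions -/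
lemma gg_bounds (hl : 0 < l) {q : ℝ} (hq : q < 0) : ∃ a b : ℝ≥0∞, a ≠ 0 ∧ b ≠ ⊤ ∧
    ∀ G ∈ GG n l, ∀ ξ, a ≤ gg q G ξ ∧ gg q G ξ ≤ b := by
  have hk : ENNReal.ofReal (kap l) ≠ 0 := by simpa using kap_pos hl
  have hK : ENNReal.ofReal (2 ^ l) ≠ 0 := by
    have : (0 : ℝ) < 2 ^ l := by positivity
    simpa using this
  refine ⟨ENNReal.ofReal (2 ^ l) ^ (q - 1), ENNReal.ofReal (kap l) ^ (q - 1),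
    (rpow_ne hK ENNReal.ofReal_ne_top _).1, (rpow_ne hk ENNReal.ofReal_ne_top _).2,
    fun G hG ξ => ?_⟩
  exact rpow_bounds (by linarith) (ENNReal.ofReal_le_ofReal (hG.1 ξ).1)
    (ENNReal.ofReal_le_ofReal (hG.1 ξ).2)

lemma pow_bounds (hl : 0 < l) {q : ℝ} (hq : q < 0) : ∃ a b : ℝ≥0∞, a ≠ 0 ∧ b ≠ ⊤ ∧
    ∀ G ∈ GG n l, ∀ ξ, a ≤ ENNReal.ofReal (G ξ) ^ q ∧ ENNReal.ofReal (G ξ) ^ q ≤ b := by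
  have hk : ENNReal.ofReal (kap l) ≠ 0 := by simpa using kap_pos hl
  have hK : ENNReal.ofReal (2 ^ l) ≠ 0 := by
    have : (0 : ℝ) < 2 ^ l := by positivity
    simpa using this
  refine ⟨ENNReal.ofReal (2 ^ l) ^ q, ENNReal.ofReal (kap l) ^ q,
    (rpow_ne hK ENNReal.ofReal_ne_top _).1, (rpow_ne hk ENNReal.ofReal_ne_top _).2,
    fun G hG ξ => ?_⟩
  exact rpow_bounds (by linarith) (ENNReal.ofReal_le_ofReal (hG.1 ξ).1)
    (ENNReal.ofReal_le_ofReal (hG.1 ξ).2)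

lemma TTgg_bounds (hn : 1 ≤ n) (hl : 0 < l) {q : ℝ} (hq : q < 0) : ∃ a b : ℝ≥0∞, a ≠ 0 ∧ b ≠ ⊤ ∧
    ∀ G ∈ GG n l, ∀ ξ, a ≤ TT l (gg q G) ξ ∧ TT l (gg q G) ξ ≤ b := by
  obtain ⟨a, b, ha, hb, h⟩ := gg_bounds (n := n) hl hq
  have hab : a ≠ ⊤ := by
    obtain ⟨G, hG⟩ := GG_nonempty (n := n) hl
    obtain ⟨ξ⟩ := sph_nonempty n
    exact ne_top_of_le_ne_top hb ((h G hG ξ).1.trans (h G hG ξ).2)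
  have hi := lintegral_bounds (u := fun _ : Sph n => a) ha hab (fun _ => le_rfl) (fun _ => le_rfl)
  obtain ⟨c, hc, hc'⟩ := TT_lower hn hl (measurable_const (a := a)) hi.1 hi.2
  refine ⟨c, ENNReal.ofReal (2 ^ l) * (b * sphereMeasure n Set.univ), hc,
    ENNReal.mul_ne_top ENNReal.ofReal_ne_top (ENNReal.mul_ne_top hb (measure_ne_top _ _)),
    fun G hG ξ => ⟨?_, ?_⟩⟩
  · refine (hc' ξ).trans (lintegral_mono fun η => ?_)
    gcongr
    exact (h G hG η).1
  · refine (TT_le hl _ ξ).trans ?_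
    gcongr
    rw [← lintegral_const]
    exact lintegral_mono fun η => (h G hG η).2

lemma TTgg_pow_bounds (hn : 1 ≤ n) (hl : 0 < l) {q : ℝ} (hq : q < 0) : ∃ a b : ℝ≥0∞, a ≠ 0 ∧ b ≠ ⊤ ∧
    ∀ G ∈ GG n l, ∀ ξ, a ≤ TT l (gg q G) ξ ^ q ∧ TT l (gg q G) ξ ^ q ≤ b := by
  obtain ⟨a, b, ha, hb, h⟩ := TTgg_bounds hn hl hq
  obtain ⟨G, hG⟩ := GG_nonempty (n := n) hl
  obtain ⟨ξ⟩ := sph_nonempty n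
  have hab := (h G hG ξ).1.trans (h G hG ξ).2
  refine ⟨b ^ q, a ^ q, (rpow_ne ?_ hb _).1, (rpow_ne ha (ne_top_of_le_ne_top hb hab) _).2,
    fun G hG ξ => rpow_bounds hq.le (h G hG ξ).1 (h G hG ξ).2⟩
  intro h0
  rw [h0] at hab
  exact ha (nonpos_iff_eq_zero.1 hab)

lemma contOn_lintegral {s : Set (BoundedContinuousFunction (Sph n) ℝ)}
    {u : BoundedContinuousFunction (Sph n) ℝ → Sph n → ℝ≥0∞} {b : ℝ≥0∞} (hb : b ≠ ⊤)
    (hm : ∀ G, Measurable (u G)) (h : ∀ G ∈ s, ∀ ξ, u G ξ ≤ b)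
    (hc : ∀ ξ, ContinuousOn (fun G => u G ξ) s) :
    ContinuousOn (fun G => ∫⁻ ξ, u G ξ ∂(sphereMeasure n)) s := by
  intro G hG
  refine tendsto_lintegral_filter_of_dominated_convergence (fun _ => b) ?_ ?_ ?_ ?_
  · exact Filter.Eventually.of_forall hm
  · filter_upwards [self_mem_nhdsWithin] with G' hG'
    exact Filter.Eventually.of_forall (h G' hG')
  · rw [lintegral_const]
    exact ENNReal.mul_ne_top hb (measure_ne_top _ _)
  · exact Filter.Eventually.of_forall fun ξ => hc ξ G hG

lemma eval_cont (ξ : Sph n) (r : ℝ) : Continuous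
    fun G : BoundedContinuousFunction (Sph n) ℝ => ENNReal.ofReal (G ξ) ^ r :=
  ENNReal.continuous_rpow_const.comp (ENNReal.continuous_ofReal.comp
    (BoundedContinuousFunction.lipschitz_eval_const ξ).continuous)

lemma IA_cont (hl : 0 < l) {q : ℝ} (hq : q < 0) : ContinuousOn (IA (n := n) q) (GG n l) := by
  obtain ⟨a, b, ha, hb, h⟩ := pow_bounds (n := n) hl hq
  exact contOn_lintegral hb (fun G => (G.continuous.measurable.ennreal_ofReal).pow_const _)
    (fun G hG ξ => (h G hG ξ).2) (fun ξ => (eval_cont ξ q).continuousOn)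

lemma IB_cont (hn : 1 ≤ n) (hl : 0 < l) {q : ℝ} (hq : q < 0) :
    ContinuousOn (IB (n := n) l q) (GG n l) := by
  obtain ⟨a, b, ha, hb, h⟩ := TTgg_pow_bounds hn hl hq
  refine contOn_lintegral hb (fun G => (TT_measurable (gg_measurable q G)).pow_const _)
    (fun G hG ξ => (h G hG ξ).2) (fun ξ => ?_)
  refine ENNReal.continuous_rpow_const.comp_continuousOn ?_
  obtain ⟨a', b', ha', hb', h'⟩ := gg_bounds (n := n) hl hq
  refine contOn_lintegral (b := b' * ENNReal.ofReal (2 ^ l))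
    (u := fun G η => gg q G η * kern l ξ η) (ENNReal.mul_ne_top hb' ENNReal.ofReal_ne_top)
    (fun G => (gg_measurable q G).mul (kern_measurable ξ)) (fun G hG η => ?_) (fun η => ?_)
  · exact mul_le_mul' (h' G hG η).2 (kern_le hl ξ η)
  · have := ENNReal.continuous_mul_const (a := kern l ξ η) ENNReal.ofReal_ne_top
    exact (this.comp (eval_cont η (q - 1))).continuousOn

lemma IA_ne (hl : 0 < l) {q : ℝ} (hq : q < 0) {G} (hG : G ∈ GG n l) : IA q G ≠ 0 ∧ IA q G ≠ ⊤ := by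
  obtain ⟨a, b, ha, hb, h⟩ := pow_bounds (n := n) hl hq
  exact lintegral_bounds ha hb (fun ξ => (h G hG ξ).1) (fun ξ => (h G hG ξ).2)

lemma IB_ne (hn : 1 ≤ n) (hl : 0 < l) {q : ℝ} (hq : q < 0) {G} (hG : G ∈ GG n l) :
    IB l q G ≠ 0 ∧ IB l q G ≠ ⊤ := by
  obtain ⟨a, b, ha, hb, h⟩ := TTgg_pow_bounds (n := n) hn hl hq
  exact lintegral_bounds ha hb (fun ξ => (h G hG ξ).1) (fun ξ => (h G hG ξ).2)

/-- the functional to be minimized -/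
noncomputable def JJ (l p q : ℝ) (G : BoundedContinuousFunction (Sph n) ℝ) : ℝ≥0∞ :=
  IB l q G ^ (1 / q) * IA q G ^ (-(1 / p))

lemma JJ_min (hn : 1 ≤ n) (hl : 0 < l) {p q : ℝ} (hq : q < 0) :
    ∃ G ∈ GG n l, ∀ G' ∈ GG n l, JJ l p q G ≤ JJ l p q G' := by
  have : ContinuousOn (JJ (n := n) l p q) (GG n l) := by
    intro G hG
    have hA := IA_ne hl hq hG
    have hB := IB_ne hn hl hq hG
    have hA' := rpow_ne hA.1 hA.2 (-(1 / p))
    have hB' := rpow_ne hB.1 hB.2 (1 / q)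
    exact ENNReal.Tendsto.mul
      ((ENNReal.continuous_rpow_const.tendsto _).comp (IB_cont hn hl hq G hG)) (Or.inl hB'.1)
      ((ENNReal.continuous_rpow_const.tendsto _).comp (IA_cont hl hq G hG)) (Or.inl hA'.1)
  obtain ⟨G, hG, h⟩ := (GG_compact hl).exists_isMinOn (GG_nonempty hl) this
  exact ⟨G, hG, fun G' hG' => h hG'⟩

lemma TT_symm {f g : Sph n → ℝ≥0∞} (hf : Measurable f) (hg : Measurable g) :
    ∫⁻ ξ, TT l f ξ * g ξ ∂(sphereMeasure n) = ∫⁻ ξ, f ξ * TT l g ξ ∂(sphereMeasure n) := by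
  unfold TT
  have h1 : ∀ ξ, (∫⁻ η, f η * kern l ξ η ∂(sphereMeasure n)) * g ξ =
      ∫⁻ η, f η * kern l ξ η * g ξ ∂(sphereMeasure n) := fun ξ =>
    (lintegral_mul_const _ (hf.mul (kern_measurable ξ))).symm
  have h2 : ∀ ξ, f ξ * (∫⁻ η, g η * kern l ξ η ∂(sphereMeasure n)) =
      ∫⁻ η, f ξ * (g η * kern l ξ η) ∂(sphereMeasure n) := fun ξ =>
    (lintegral_const_mul _ (hg.mul (kern_measurable ξ))).symm
  simp only [h1, h2]
  rw [lintegral_lintegral_swap]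
  · refine lintegral_congr fun ξ => lintegral_congr fun η => ?_
    rw [kern_comm]; ring
  · exact (((hf.comp measurable_snd).mul kern_measurable2).mul (hg.comp measurable_fst)).aemeasurable

lemma JJ_le (hn : 1 ≤ n) (hl : 0 < l) {p q : ℝ} (hp : 0 < p) (hp1 : p < 1) (hq : q = p / (p - 1))
    {f : Sph n → ℝ≥0∞} (hf : Measurable f) (hf1 : ∫⁻ ξ, f ξ ^ p ∂(sphereMeasure n) = 1)
    {m : ℝ≥0∞} (hm0 : m ≠ 0) (hmt : m ≠ ⊤) {G} (hG : G ∈ GG n l)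
    (hfG : ∀ ξ, TT l f ξ = m * ENNReal.ofReal (G ξ)) :
    JJ l p q G ≤ (∫⁻ ξ, TT l f ξ ^ q ∂(sphereMeasure n)) ^ (1 / q) := by
  have hq0 : q < 0 := by rw [hq]; exact div_neg_of_pos_of_neg hp (by linarith)
  have hA := IA_ne hl hq0 hG
  have hB := IB_ne hn hl hq0 hG
  have hgg := gg_measurable q G
  obtain ⟨a, b, ha, hb, hab⟩ := TTgg_bounds hn hl hq0
  have h1 := reverse_holder hp hp1 hq hf (TT_measurable (l := l) hgg) hf1
    (fun ξ h => ha (nonpos_iff_eq_zero.1 (h ▸ (hab G hG ξ).1)))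
    (fun ξ => ne_top_of_le_ne_top hb (hab G hG ξ).2) hB.1 hB.2
  rw [← TT_symm hf hgg] at h1
  have h2 : ∫⁻ ξ, TT l f ξ * gg q G ξ ∂(sphereMeasure n) = m * IA q G := by
    rw [IA, ← lintegral_const_mul' _ _ hmt]
    refine lintegral_congr fun ξ => ?_
    have h0 : ENNReal.ofReal (G ξ) ≠ 0 := by simpa using (kap_pos hl).trans_le (hG.1 ξ).1
    rw [hfG, gg, mul_assoc]
    congr 1
    nth_rewrite 1 [← ENNReal.rpow_one (ENNReal.ofReal (G ξ))]
    rw [← ENNReal.rpow_add _ _ h0 ENNReal.ofReal_ne_top]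
    congr 1; ring
  have h3 : (∫⁻ ξ, TT l f ξ ^ q ∂(sphereMeasure n)) ^ (1 / q) = m * IA q G ^ (1 / q) := by
    have : ∫⁻ ξ, TT l f ξ ^ q ∂(sphereMeasure n) = m ^ q * IA q G := by
      rw [IA, ← lintegral_const_mul' _ _ (rpow_ne hm0 hmt q).2]
      refine lintegral_congr fun ξ => ?_
      rw [hfG, ennreal_mul_rpow hm0 hmt]
    rw [this, ennreal_mul_rpow (rpow_ne hm0 hmt q).1 (rpow_ne hm0 hmt q).2, ← ENNReal.rpow_mul,
      mul_one_div_cancel hq0.ne, ENNReal.rpow_one]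
  rw [h2] at h1
  rw [h3, JJ]
  calc IB l q G ^ (1 / q) * IA q G ^ (-(1 / p)) ≤ m * IA q G * IA q G ^ (-(1 / p)) := by
        gcongr
        exact h1
    _ = m * IA q G ^ (1 / q) := by
        rw [mul_assoc]
        congr 1
        nth_rewrite 1 [← ENNReal.rpow_one (IA q G)]
        rw [← ENNReal.rpow_add _ _ hA.1 hA.2]
        congr 1
        rw [hq]
        have : p - 1 ≠ 0 := by linarith
        field_simp
        ring

end Var

section Fin
variable {n : ℕ} {l : ℝ}

lemma fin_of_TT (hn : 1 ≤ n) (hl : 0 < l) {q : ℝ} (hq : q < 0) {F : Sph n → ℝ≥0∞} (hF : Measurable F)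
    (h : (∫⁻ ξ, TT l F ξ ^ q ∂(sphereMeasure n)) ^ (1 / q) ≠ ⊤) :
    ∫⁻ η, F η ∂(sphereMeasure n) ≠ ⊤ := by
  have hq1 : 1 / q < 0 := div_neg_of_pos_of_neg one_pos hq
  have h0 : ∫⁻ ξ, TT l F ξ ^ q ∂(sphereMeasure n) ≠ 0 := by
    intro h0
    rw [h0, ENNReal.zero_rpow_of_neg hq1] at h
    exact h rfl
  have hS : sphereMeasure n {ξ | TT l F ξ ≠ ⊤} ≠ 0 := by
    intro hS
    apply h0
    rw [lintegral_eq_zero_iff ((TT_measurable hF).pow_const _)]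
    have : ∀ᵐ ξ ∂(sphereMeasure n), TT l F ξ = ⊤ := by
      rw [ae_iff]; exact hS
    filter_upwards [this] with ξ hξ
    rw [hξ, ENNReal.top_rpow_of_neg hq]; rfl
  obtain ⟨a, ha⟩ := nonempty_of_measure_ne_zero hS
  obtain ⟨b, hb, hab⟩ : ∃ b, TT l F b ≠ ⊤ ∧ b ≠ a := by
    by_contra! hcon
    exact hS (measure_mono_null (fun b hb => hcon b hb) (sph_singleton hn a))
  have hcont : Continuous (fun η : Sph n => kern l η a + kern l η b) :=
    (kern_continuous hl a).add (kern_continuous hl b)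
  have := sph_nonempty n
  obtain ⟨x, -, hx⟩ := isCompact_univ.exists_isMinOn (Set.univ_nonempty (α := Sph n)) hcont.continuousOn
  set c := kern l x a + kern l x b with hc
  have hc0 : c ≠ 0 := by
    intro h
    rw [hc, add_eq_zero] at h
    by_cases hxa : x = a
    · exact (kern_pos (l := l) (hxa ▸ hab.symm : x ≠ b)).ne' h.2
    · exact (kern_pos (l := l) hxa).ne' h.1
  have hle : c * ∫⁻ η, F η ∂(sphereMeasure n) ≤ TT l F a + TT l F b := by
    have hma : Measurable fun η => F η * kern l a η := hF.mul (kern_measurable a)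
    unfold TT
    rw [← lintegral_add_left hma, ← lintegral_const_mul _ hF]
    refine lintegral_mono fun η => ?_
    have h1 : c ≤ kern l η a + kern l η b := hx (Set.mem_univ η)
    rw [← mul_add, mul_comm, kern_comm a, kern_comm b]
    gcongr
  intro htop
  rw [htop, ENNReal.mul_top hc0, top_le_iff] at hle
  exact (ENNReal.add_ne_top.2 ⟨ha, hb⟩) hle

lemma riesz_eq (α : ℝ) {F : Sph n → ℝ} (hF : ∀ ξ, 0 ≤ F ξ) (ξ : Sph n) :
    sphereRiesz n α F ξ = TT (α - n) (fun η => ENNReal.ofReal (F η)) ξ := by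
  unfold sphereRiesz TT kern
  exact lintegral_congr fun η => ENNReal.ofReal_mul (hF η)

lemma norm_iff {p : ℝ} (hp : 0 < p) {F : Sph n → ℝ} (hm : Measurable F) (hF : ∀ ξ, 0 ≤ F ξ) :
    (Integrable (fun ξ => |F ξ| ^ p) (sphereMeasure n) ∧
    (∫ ξ, |F ξ| ^ p ∂(sphereMeasure n)) ^ (1 / p) = 1) ↔
    ∫⁻ ξ, ENNReal.ofReal (F ξ) ^ p ∂(sphereMeasure n) = 1 := by
  have hmeas : Measurable (fun ξ => |F ξ| ^ p) := (hm.abs).pow_const _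
  have hnn : ∀ ξ, 0 ≤ |F ξ| ^ p := fun ξ => by positivity
  have e : ∀ ξ, ENNReal.ofReal (|F ξ| ^ p) = ENNReal.ofReal (F ξ) ^ p := fun ξ => by
    rw [abs_of_nonneg (hF ξ), ENNReal.ofReal_rpow_of_nonneg (hF ξ) hp.le]
  have e2 : ∫ ξ, |F ξ| ^ p ∂(sphereMeasure n) =
      (∫⁻ ξ, ENNReal.ofReal (F ξ) ^ p ∂(sphereMeasure n)).toReal := by
    rw [integral_eq_lintegral_of_nonneg_ae (Filter.Eventually.of_forall hnn)
      hmeas.aestronglyMeasurable]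
    simp only [e]
  constructor
  · rintro ⟨-, h2⟩
    rw [e2] at h2
    have h3 : (∫⁻ ξ, ENNReal.ofReal (F ξ) ^ p ∂(sphereMeasure n)).toReal = 1 := by
      have := congrArg (fun x : ℝ => x ^ p) h2
      simp only [one_div, Real.one_rpow] at this
      rwa [Real.rpow_inv_rpow ENNReal.toReal_nonneg hp.ne'] at this
    exact (ENNReal.toReal_eq_one_iff _).1 h3
  · intro h
    refine ⟨⟨hmeas.aestronglyMeasurable, ?_⟩, ?_⟩
    · rw [hasFiniteIntegral_iff_ofReal (Filter.Eventually.of_forall hnn)]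
      simp only [e, h]
      exact ENNReal.one_lt_top
    · rw [e2, h]; simp

end Fin

/-- **Existence of extremal functions** (Section 3.1): for `1 ≤ n < α`, `p = 2n/(n+α)`,
`q = 2n/(n-α)`, the infimum `N*(n,α) = inf { ‖Ĩ_α F‖_{L^q(𝕊ⁿ)} : F ≥ 0, ‖F‖_{L^p(𝕊ⁿ)} = 1 }`
is positive and attained by some nonnegative `F₀ ∈ L^p(𝕊ⁿ)` with `‖F₀‖_{L^p(𝕊ⁿ)} = 1`. -/
theorem reversed_HLS_sphere_infimum_attained (n : ℕ) (hn : 1 ≤ n) (α p q : ℝ)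
    (hα : (n : ℝ) < α)
    (hp : p = 2 * n / ((n : ℝ) + α)) (hq : q = 2 * n / ((n : ℝ) - α)) :
    0 < sInf (minimizingValues n α p q) ∧
    ∃ F₀ : sphere (0 : EuclideanSpace ℝ (Fin (n + 1))) 1 → ℝ,
      Measurable F₀ ∧ (∀ ξ, 0 ≤ F₀ ξ) ∧
      Integrable (fun ξ => |F₀ ξ| ^ p) (sphereMeasure n) ∧
      (∫ ξ, |F₀ ξ| ^ p ∂(sphereMeasure n)) ^ (1 / p) = 1 ∧
      (∫⁻ ξ, (sphereRiesz n α F₀ ξ) ^ q ∂(sphereMeasure n)) ^ (1 / q) =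
        sInf (minimizingValues n α p q) := by
  have hn0 : (0 : ℝ) < n := by exact_mod_cast hn
  have hl : 0 < α - n := by linarith
  have hsum : 0 < (n : ℝ) + α := by linarith
  have hdif : (n : ℝ) - α ≠ 0 := by linarith
  have hp0 : 0 < p := by rw [hp]; positivity
  have hp1 : p < 1 := by rw [hp, div_lt_one hsum]; linarith
  have hq0 : q < 0 := by rw [hq]; exact div_neg_of_pos_of_neg (by positivity) (by linarith)
  have hpq : q = p / (p - 1) := by
    have : p - 1 = (n - α) / (n + α) := by rw [hp]; field_simp; ring
    rw [this, hp, hq]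
    field_simp
  have hpe : p * (n + (α - n) / 2) = n := by rw [hp]; field_simp; ring
  have hqe : q * ((α - n) / 2) = -n := by rw [hq]; field_simp; ring
  obtain ⟨G, hG, hmin⟩ := JJ_min (p := p) hn hl hq0
  have hA := IA_ne hl hq0 hG
  have hB := IB_ne hn hl hq0 hG
  have hlb : ∀ r ∈ minimizingValues n α p q, JJ (α - n) p q G ≤ r := by
    rintro r ⟨F, hFm, hF0, hFi, hF1, rfl⟩
    simp only [riesz_eq α hF0]
    set f : Sph n → ℝ≥0∞ := fun η => ENNReal.ofReal (F η) with hf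
    have hfm : Measurable f := hFm.ennreal_ofReal
    have hf1 : ∫⁻ ξ, f ξ ^ p ∂(sphereMeasure n) = 1 := (norm_iff hp0 hFm hF0).1 ⟨hFi, hF1⟩
    by_cases htop : (∫⁻ ξ, TT (α - n) f ξ ^ q ∂(sphereMeasure n)) ^ (1 / q) = ⊤
    · rw [htop]; exact le_top
    have hfin := fin_of_TT hn hl hq0 hfm htop
    have hne : ∫⁻ η, f η ∂(sphereMeasure n) ≠ 0 := by
      intro h
      rw [lintegral_eq_zero_iff hfm] at h
      have : ∫⁻ ξ, f ξ ^ p ∂(sphereMeasure n) = 0 := by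
        rw [lintegral_eq_zero_iff (hfm.pow_const _)]
        filter_upwards [h] with ξ hξ
        rw [hξ]; exact ENNReal.zero_rpow_of_pos hp0
      rw [hf1] at this
      exact one_ne_zero this
    obtain ⟨y, hy0, hyt, hy⟩ := exists_balanced hn hl hfm hne hfin
    have hcm := cf_measurable (l := α - n) y hfm
    obtain ⟨G', hG', hfG⟩ := exists_GG hl hcm (lintegral_cf y hfm) hy0 hyt hy
    have := JJ_le hn hl hp0 hp1 hpq hcm ((lintegral_cf_rpow hpe y hfm).trans hf1) hy0 hyt hG' hfG
    rw [lintegral_TT_cf_rpow hqe y hfm] at this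
    exact (hmin G' hG').trans this
  -- the minimizer
  have hc := rpow_ne hA.1 hA.2 (-(1 / p))
  obtain ⟨a, b, ha, hb, hab⟩ := gg_bounds (n := n) hl hq0
  set F₀ : Sph n → ℝ := fun ξ => (IA q G ^ (-(1 / p)) * gg q G ξ).toReal with hF₀
  have hm₀ : Measurable F₀ := ((gg_measurable q G).const_mul _).ennreal_toReal
  have h0 : ∀ ξ, 0 ≤ F₀ ξ := fun ξ => ENNReal.toReal_nonneg
  have hof : ∀ ξ, ENNReal.ofReal (F₀ ξ) = IA q G ^ (-(1 / p)) * gg q G ξ := fun ξ =>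
    ENNReal.ofReal_toReal (ENNReal.mul_ne_top hc.2 (ne_top_of_le_ne_top hb (hab G hG ξ).2))
  have hnorm : ∫⁻ ξ, ENNReal.ofReal (F₀ ξ) ^ p ∂(sphereMeasure n) = 1 := by
    have hq2 : (q - 1) * p = q := by
      rw [hpq]
      have : p - 1 ≠ 0 := by linarith
      field_simp
      ring
    have : ∀ ξ, ENNReal.ofReal (F₀ ξ) ^ p = (IA q G)⁻¹ * ENNReal.ofReal (G ξ) ^ q := by
      intro ξ
      rw [hof, ennreal_mul_rpow hc.1 hc.2, gg, ← ENNReal.rpow_mul, ← ENNReal.rpow_mul, hq2,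
        neg_mul, one_div, inv_mul_cancel₀ hp0.ne', ENNReal.rpow_neg_one]
    simp only [this]
    rw [lintegral_const_mul' _ _ (ENNReal.inv_ne_top.2 hA.1)]
    exact ENNReal.inv_mul_cancel hA.1 hA.2
  have hval : (∫⁻ ξ, (sphereRiesz n α F₀ ξ) ^ q ∂(sphereMeasure n)) ^ (1 / q) =
      JJ (α - n) p q G := by
    simp only [riesz_eq α h0, hof]
    have : ∀ ξ, TT (α - n) (fun η => IA q G ^ (-(1 / p)) * gg q G η) ξ ^ q =
        (IA q G ^ (-(1 / p))) ^ q * TT (α - n) (gg q G) ξ ^ q := by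
      intro ξ
      rw [← ennreal_mul_rpow hc.1 hc.2]
      unfold TT
      rw [← lintegral_const_mul' _ _ hc.2]
      simp only [mul_assoc]
    simp only [this]
    have hcq := rpow_ne hc.1 hc.2 q
    rw [lintegral_const_mul' _ _ hcq.2, ennreal_mul_rpow hcq.1 hcq.2, ← ENNReal.rpow_mul (IA q G ^ (-(1 / p))),
      mul_one_div_cancel hq0.ne, ENNReal.rpow_one, JJ, IB, mul_comm]
  obtain ⟨hI, hN⟩ := (norm_iff hp0 hm₀ h0).2 hnorm
  have hinf : JJ (α - n) p q G = sInf (minimizingValues n α p q) :=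
    le_antisymm (le_sInf hlb) (sInf_le ⟨F₀, hm₀, h0, hI, hN, hval.symm⟩)
  refine ⟨?_, F₀, hm₀, h0, hI, hN, hval.trans hinf⟩
  rw [← hinf, pos_iff_ne_zero, JJ]
  exact mul_ne_zero (rpow_ne hB.1 hB.2 _).1 hc.1
end

section
/- Let 1 ≤ n < α, p = 2n/(n+α), q = 2n/(n−α). Let F₀ ∈ L^p(𝕊ⁿ) be a nonnegative minimizer of ‖Ĩ_α F‖_{L^q(𝕊ⁿ)} over nonnegative F with ‖F‖_{L^p(𝕊ⁿ)} = 1, normalized so that ‖F₀‖_{L^p(𝕊ⁿ)} = 1. Then there exists a constant c₀ > 0 such that F₀(ξ) ≥ c₀ for every ξ ∈ 𝕊ⁿ, and (after multiplying F₀ by a suitable positive constant) F₀ is a positive weak solution of the Euler–Lagrange equation F₀(ξ)^{p−1} = ∫_{𝕊ⁿ} (Ĩ_α F₀(η))^{q−1} |ξ−η|^{α−n} dη for all ξ ∈ 𝕊ⁿ. -/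
open MeasureTheory ENNReal Metric

lemma aux_bern_neg {x y q : ℝ} (hx : 0 < x) (hy : 0 < y) (hq : q < 0) :
    x ^ q + q * (x ^ (q - 1) * (y - x)) ≤ y ^ q := by
  have ht : 0 < y / x := div_pos hy hx
  have h1 : 1 + q * (y / x - 1) ≤ (y / x) ^ q := by
    rw [Real.rpow_def_of_pos ht]
    have h2 := Real.add_one_le_exp (Real.log (y / x) * q)
    have h3 := Real.log_le_sub_one_of_pos ht
    nlinarith
  have h4 : y ^ q = x ^ q * (y / x) ^ q := by
    rw [← Real.mul_rpow hx.le ht.le]; congr 1; field_simp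
  have h5 : x ^ (q - 1) = x ^ q / x := by rw [Real.rpow_sub_one hx.ne']
  have h6 := mul_le_mul_of_nonneg_left h1 (Real.rpow_pos_of_pos hx q).le
  rw [h4, h5]
  calc _ = x ^ q * (1 + q * (y / x - 1)) := by field_simp
    _ ≤ _ := h6

lemma aux_bern_pos {x y p : ℝ} (hx : 0 < x) (hy : 0 ≤ y) (hp0 : 0 < p) (hp1 : p < 1) :
    y ^ p ≤ x ^ p + p * (x ^ (p - 1) * (y - x)) ∧
      (y ^ p = x ^ p + p * (x ^ (p - 1) * (y - x)) → y = x) := by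
  have ht : 0 ≤ y / x := div_nonneg hy hx.le
  have h4 : y ^ p = x ^ p * (y / x) ^ p := by
    rw [← Real.mul_rpow hx.le ht]; congr 1; field_simp
  have h5 : x ^ (p - 1) = x ^ p / x := by rw [Real.rpow_sub_one hx.ne']
  have h7 : x ^ p + p * (x ^ (p - 1) * (y - x)) = x ^ p * (1 + p * (y / x - 1)) := by
    rw [h5]; field_simp
  have hxp := Real.rpow_pos_of_pos hx p
  by_cases hxy : y = x
  · subst hxy
    simp
  · have h8 := rpow_one_add_lt_one_add_mul_self (s := y / x - 1) (by linarith)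
      (by rw [sub_ne_zero, Ne, div_eq_one_iff_eq hx.ne']; exact hxy) hp0 hp1
    rw [add_sub_cancel] at h8
    rw [h7, h4]
    have h9 := mul_lt_mul_of_pos_left h8 hxp
    exact ⟨h9.le, fun h => absurd h h9.ne⟩

section abstractPart

variable {X : Type*} [MetricSpace X] [CompactSpace X] [MeasurableSpace X] [BorelSpace X]

/-- Real-valued potential. -/
noncomputable def auxT (μ : Measure X) (s : ℝ) (f : X → ℝ) (x : X) : ℝ :=
  ∫ y, f y * dist x y ^ s ∂μ

lemma aux_kernel_cont {s : ℝ} (hs : 0 < s) :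
    Continuous (fun z : X × X => dist z.1 z.2 ^ s) :=
  (continuous_dist).rpow_const (fun _ => Or.inr hs.le)

lemma aux_kernel_bdd (X : Type*) [MetricSpace X] [CompactSpace X] {s : ℝ} (hs : 0 < s) :
    ∃ C : ℝ, 0 ≤ C ∧ ∀ x y : X, dist x y ^ s ≤ C := by
  refine ⟨(diam (Set.univ : Set X)) ^ s, by positivity, fun x y => ?_⟩
  exact Real.rpow_le_rpow dist_nonneg
    (dist_le_diam_of_mem isCompact_univ.isBounded (Set.mem_univ _) (Set.mem_univ _)) hs.le

lemma aux_integrable_kernel {μ : Measure X} {s : ℝ} (hs : 0 < s) {f : X → ℝ}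
    (hf : Integrable f μ) (x : X) : Integrable (fun y => f y * dist x y ^ s) μ := by
  obtain ⟨C, hC, h⟩ := aux_kernel_bdd X hs
  refine hf.mul_bdd (c := C) ?_ (Filter.Eventually.of_forall fun y => ?_)
  · exact ((aux_kernel_cont hs).comp (Continuous.prodMk_right x)).aestronglyMeasurable
  · rw [Real.norm_of_nonneg (by positivity)]; exact h x y

lemma auxT_continuous {μ : Measure X} {s : ℝ} (hs : 0 < s) {f : X → ℝ}
    (hf : Integrable f μ) : Continuous (auxT μ s f) := by
  obtain ⟨C, hC, h⟩ := aux_kernel_bdd X hs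
  unfold auxT
  refine continuous_of_dominated (bound := fun y => |f y| * C) (fun x => ?_) (fun x => ?_) ?_ ?_
  · exact (aux_integrable_kernel hs hf x).aestronglyMeasurable
  · refine Filter.Eventually.of_forall fun y => ?_
    rw [norm_mul, Real.norm_eq_abs, Real.norm_of_nonneg (by positivity)]
    exact mul_le_mul_of_nonneg_left (h x y) (abs_nonneg _)
  · exact hf.abs.mul_const C
  · refine Filter.Eventually.of_forall fun y => ?_
    exact continuous_const.mul ((aux_kernel_cont hs).comp (Continuous.prodMk_left y))

lemma auxT_pos {μ : Measure X} [NullSingletonClass μ] {s : ℝ} (hs : 0 < s) {f : X → ℝ}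
    (hf : Integrable f μ) (hf0 : ∀ x, 0 ≤ f x) (hne : ¬ f =ᵐ[μ] 0) (x : X) :
    0 < auxT μ s f x := by
  have hnn : 0 ≤ auxT μ s f x :=
    integral_nonneg fun y => mul_nonneg (hf0 y) (by positivity)
  refine lt_of_le_of_ne hnn fun h => hne ?_
  have h2 := (integral_eq_zero_iff_of_nonneg
    (fun y => mul_nonneg (hf0 y) (by positivity)) (aux_integrable_kernel hs hf x)).1 h.symm
  have h3 : ∀ᵐ y ∂μ, y ≠ x := by
    simp [ae_iff]
  filter_upwards [h2, h3] with y hy hyx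
  have : 0 < dist x y ^ s := Real.rpow_pos_of_pos (dist_pos.2 hyx.symm) _
  rcases mul_eq_zero.1 hy with h | h
  · exact h
  · exact absurd h this.ne'

lemma aux_sym {μ : Measure X} [IsFiniteMeasure μ] {s : ℝ} (hs : 0 < s) {f g : X → ℝ}
    (hf : Integrable f μ) (hg : Integrable g μ) :
    ∫ x, g x * auxT μ s f x ∂μ = ∫ x, f x * auxT μ s g x ∂μ := by
  obtain ⟨C, hC, h⟩ := aux_kernel_bdd X hs
  have hint : Integrable (Function.uncurry fun x y => g x * (f y * dist x y ^ s)) (μ.prod μ) := by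
    have h1 := (hg.mul_prod hf).mul_bdd (c := C) (g := fun z : X × X => dist z.1 z.2 ^ s)
      (aux_kernel_cont hs).aestronglyMeasurable (Filter.Eventually.of_forall fun z => by
        rw [Real.norm_of_nonneg (by positivity)]; exact h z.1 z.2)
    refine h1.congr (Filter.Eventually.of_forall fun z => ?_)
    simp [Function.uncurry, mul_assoc]
  simp only [auxT, ← integral_const_mul]
  rw [integral_integral_swap hint]
  congr 1; ext y; congr 1; ext x
  rw [dist_comm]; ring

lemma aux_integrable_of_finite {μ : Measure X} [NullSingletonClass μ] {s : ℝ} (hs : 0 < s)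
    {f : X → ℝ} (hfm : Measurable f) (hf0 : ∀ x, 0 ≤ f x)
    (h : ¬ ∀ᵐ x ∂μ, ∫⁻ y, ENNReal.ofReal (f y * dist x y ^ s) ∂μ = ∞) : Integrable f μ := by
  rw [ae_iff] at h
  have hns : ¬ {x | ¬ ∫⁻ y, ENNReal.ofReal (f y * dist x y ^ s) ∂μ = ∞}.Subsingleton :=
    fun hh => h (hh.measure_zero μ)
  rw [Set.not_subsingleton_iff] at hns
  obtain ⟨a, ha, b, hb, hab⟩ := hns
  have key : ∀ c, c ∈ {x | ¬ ∫⁻ y, ENNReal.ofReal (f y * dist x y ^ s) ∂μ = ∞} →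
      Integrable (fun y => f y * dist c y ^ s) μ := by
    intro c hc
    refine ⟨?_, ?_⟩
    · exact (hfm.mul ((aux_kernel_cont hs).comp
        (Continuous.prodMk_right c)).measurable).aestronglyMeasurable
    · rw [hasFiniteIntegral_iff_ofReal
        (Filter.Eventually.of_forall fun y => mul_nonneg (hf0 y) (by positivity))]
      exact lt_top_iff_ne_top.2 hc
  have hd : 0 < dist a b / 2 := half_pos (dist_pos.2 hab)
  have hds : 0 < (dist a b / 2) ^ s := Real.rpow_pos_of_pos hd _
  refine (((key a ha).add (key b hb)).const_mul ((dist a b / 2) ^ s)⁻¹).mono'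
    hfm.aestronglyMeasurable (Filter.Eventually.of_forall fun y => ?_)
  rw [Real.norm_of_nonneg (hf0 y), Pi.add_apply, ← mul_add, inv_mul_eq_div, le_div_iff₀ hds]
  refine mul_le_mul_of_nonneg_left ?_ (hf0 y)
  have h1 : 0 ≤ dist a y ^ s := by positivity
  have h2 : 0 ≤ dist b y ^ s := by positivity
  have htri := dist_triangle_right a b y
  rcases le_total (dist a b / 2) (dist a y) with hh | hh
  · have := Real.rpow_le_rpow hd.le hh hs.le
    linarith
  · have := Real.rpow_le_rpow hd.le (by linarith : dist a b / 2 ≤ dist b y) hs.le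
    linarith

lemma aux_lint {μ : Measure X} {s : ℝ} (hs : 0 < s) {f : X → ℝ}
    (hf : Integrable f μ) (hf0 : ∀ x, 0 ≤ f x) (x : X) :
    ∫⁻ y, ENNReal.ofReal (f y * dist x y ^ s) ∂μ = ENNReal.ofReal (auxT μ s f x) :=
  (ofReal_integral_eq_lintegral_ofReal (aux_integrable_kernel hs hf x)
    (Filter.Eventually.of_forall fun y => mul_nonneg (hf0 y) (by positivity))).symm

lemma aux_cont_int {μ : Measure X} [IsFiniteMeasure μ] {f : X → ℝ} (hf : Continuous f) :
    Integrable f μ :=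
  hf.integrable_of_hasCompactSupport (HasCompactSupport.of_compactSpace f)

lemma aux_ne_zero {μ : Measure X} (hμ : μ ≠ 0) {f : X → ℝ} (hf : ∀ x, 0 < f x) :
    ¬ f =ᵐ[μ] 0 := by
  intro h
  have : ∀ᵐ x ∂μ, False := by
    filter_upwards [h] with x hx
    exact (hf x).ne' hx
  rw [Filter.eventually_false_iff_eq_bot, ae_eq_bot] at this
  exact hμ this

lemma aux_lint_pow {μ : Measure X} [IsFiniteMeasure μ] {u : X → ℝ} (hu : Continuous u)
    (hu0 : ∀ x, 0 < u x) (q : ℝ) :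
    ∫⁻ x, (ENNReal.ofReal (u x)) ^ q ∂μ = ENNReal.ofReal (∫ x, u x ^ q ∂μ) := by
  rw [ofReal_integral_eq_lintegral_ofReal
    (aux_cont_int (hu.rpow_const fun x => Or.inl (hu0 x).ne'))
    (Filter.Eventually.of_forall fun x => (Real.rpow_pos_of_pos (hu0 x) q).le)]
  congr 1; ext x
  rw [ENNReal.ofReal_rpow_of_pos (hu0 x)]

lemma aux_int_pos {μ : Measure X} [IsFiniteMeasure μ] (hμ : μ ≠ 0) {u : X → ℝ}
    (hu : Continuous u) (hu0 : ∀ x, 0 < u x) : 0 < ∫ x, u x ∂μ := by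
  refine lt_of_le_of_ne (integral_nonneg fun x => (hu0 x).le) fun h => ?_
  exact aux_ne_zero hμ hu0 ((integral_eq_zero_iff_of_nonneg (fun x => (hu0 x).le)
    (aux_cont_int hu)).1 h.symm)

theorem aux_main {μ : Measure X} [IsFiniteMeasure μ] [NullSingletonClass μ] (hμ : μ ≠ 0)
    {s p q : ℝ} (hs : 0 < s) (hp0 : 0 < p) (hp1 : p < 1) (hq : q < 0)
    (F₀ : X → ℝ) (hF₀ : Measurable F₀) (hF₀pos : ∀ ξ, 0 ≤ F₀ ξ)
    (hF₀Lp : Integrable (fun ξ => |F₀ ξ| ^ p) μ)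
    (hF₀norm : (∫ ξ, |F₀ ξ| ^ p ∂μ) ^ (1 / p) = 1)
    (hmin : ∀ F : X → ℝ, Measurable F → (∀ ξ, 0 ≤ F ξ) →
      Integrable (fun ξ => |F ξ| ^ p) μ →
      (∫ ξ, |F ξ| ^ p ∂μ) ^ (1 / p) = 1 →
      (∫⁻ ξ, (∫⁻ η, ENNReal.ofReal (F₀ η * dist ξ η ^ s) ∂μ) ^ q ∂μ) ^ (1 / q) ≤
        (∫⁻ ξ, (∫⁻ η, ENNReal.ofReal (F η * dist ξ η ^ s) ∂μ) ^ q ∂μ) ^ (1 / q)) :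
    (∃ c₀ : ℝ, 0 < c₀ ∧ ∀ᵐ ξ ∂μ, c₀ ≤ F₀ ξ) ∧
    (∃ c : ℝ, 0 < c ∧ ∀ᵐ ξ ∂μ,
      ENNReal.ofReal ((c * F₀ ξ) ^ (p - 1)) =
        ∫⁻ η, (∫⁻ ζ, ENNReal.ofReal (c * F₀ ζ * dist η ζ ^ s) ∂μ) ^ (q - 1) *
          ENNReal.ofReal (dist ξ η ^ s) ∂μ) := by
  -- restated for positive continuous competitors, before normalization
  have hnorm : ∀ H : X → ℝ, Continuous H → (∀ x, 0 < H x) →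
      ∃ c : ℝ, 0 < c ∧ ∫ x, (c * H x) ^ p ∂μ = 1 := by
    intro H hH hH0
    have hB := aux_int_pos hμ (hH.rpow_const (p := p) fun x => Or.inl (hH0 x).ne')
      (fun x => Real.rpow_pos_of_pos (hH0 x) p)
    refine ⟨(∫ x, H x ^ p ∂μ) ^ (-(1 / p)), Real.rpow_pos_of_pos hB _, ?_⟩
    have : ∀ x, ((∫ x, H x ^ p ∂μ) ^ (-(1 / p)) * H x) ^ p
        = (∫ x, H x ^ p ∂μ)⁻¹ * H x ^ p := by
      intro x
      rw [Real.mul_rpow (Real.rpow_nonneg hB.le _) (hH0 x).le, ← Real.rpow_mul hB.le]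
      congr 1
      rw [← Real.rpow_neg_one]; congr 1; field_simp
    simp only [this, integral_const_mul]
    exact inv_mul_cancel₀ hB.ne'
  have hmin' : ∀ F : X → ℝ, Continuous F → (∀ x, 0 < F x) → ∫ x, F x ^ p ∂μ = 1 →
      (∫⁻ ξ, (∫⁻ η, ENNReal.ofReal (F₀ η * dist ξ η ^ s) ∂μ) ^ q ∂μ) ^ (1 / q) ≤
        (ENNReal.ofReal (∫ x, auxT μ s F x ^ q ∂μ)) ^ (1 / q) := by
    intro F hF hFp hF1
    have e : ∀ x, |F x| ^ p = F x ^ p := fun x => by rw [abs_of_pos (hFp x)]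
    have h := hmin F hF.measurable (fun x => (hFp x).le)
      (by simp only [e]; exact aux_cont_int (hF.rpow_const fun x => Or.inl (hFp x).ne'))
      (by simp only [e, hF1, Real.one_rpow])
    refine h.trans_eq ?_
    congr 1
    rw [← aux_lint_pow (auxT_continuous hs (aux_cont_int hF))
      (auxT_pos hs (aux_cont_int hF) (fun x => (hFp x).le) (aux_ne_zero hμ hFp)) q]
    simp only [aux_lint hs (aux_cont_int hF) (fun x => (hFp x).le)]
  have hq1 : 1 / q < 0 := one_div_neg.2 hq
  have hTpos : ∀ F : X → ℝ, Continuous F → (∀ x, 0 < F x) →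
      0 < ∫ x, auxT μ s F x ^ q ∂μ := by
    intro F hF hFp
    have hc := auxT_continuous hs (aux_cont_int (μ := μ) hF)
    have h0 := auxT_pos hs (aux_cont_int hF) (fun x => (hFp x).le) (aux_ne_zero hμ hFp)
    exact aux_int_pos hμ (hc.rpow_const fun x => Or.inl (h0 x).ne')
      (fun x => Real.rpow_pos_of_pos (h0 x) _)
  -- `F₀` is integrable
  have hF₀int : Integrable F₀ μ := by
    refine aux_integrable_of_finite hs hF₀ hF₀pos fun h => ?_
    have h0 : ∫⁻ ξ, (∫⁻ η, ENNReal.ofReal (F₀ η * dist ξ η ^ s) ∂μ) ^ q ∂μ = 0 := by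
      rw [lintegral_congr_ae (g := fun _ => 0), lintegral_zero]
      filter_upwards [h] with x hx
      rw [hx, ENNReal.top_rpow_of_neg hq]
    obtain ⟨c, hc, hc1⟩ := hnorm (fun _ => 1) continuous_const (fun _ => one_pos)
    have h1 := hmin' (fun _ => c * 1) continuous_const (fun _ => by simpa using hc) hc1
    have h2 := hTpos (fun _ => c * 1) continuous_const (fun _ => by simpa using hc)
    rw [h0, ENNReal.zero_rpow_of_neg hq1, ENNReal.ofReal_rpow_of_pos h2] at h1
    exact absurd (top_le_iff.1 h1) ENNReal.ofReal_ne_top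
  have hF₀p : ∫ x, F₀ x ^ p ∂μ = 1 := by
    have e : ∀ x, |F₀ x| ^ p = F₀ x ^ p := fun x => by rw [abs_of_nonneg (hF₀pos x)]
    simp only [e] at hF₀norm
    have hnn : 0 ≤ ∫ x, F₀ x ^ p ∂μ := integral_nonneg fun x => Real.rpow_nonneg (hF₀pos x) _
    rw [← Real.rpow_one (∫ x, F₀ x ^ p ∂μ), ← one_div_mul_cancel hp0.ne', Real.rpow_mul hnn,
      hF₀norm, Real.one_rpow, one_div_mul_cancel hp0.ne']
  have hF₀Lp' : Integrable (fun x => F₀ x ^ p) μ := by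
    have e : ∀ x, |F₀ x| ^ p = F₀ x ^ p := fun x => by rw [abs_of_nonneg (hF₀pos x)]
    simpa only [e] using hF₀Lp
  have hF₀ne : ¬ F₀ =ᵐ[μ] 0 := by
    intro h
    have : ∫ x, F₀ x ^ p ∂μ = 0 := by
      rw [integral_congr_ae (g := fun _ => 0), integral_zero]
      filter_upwards [h] with x hx
      rw [hx, Pi.zero_apply, Real.zero_rpow hp0.ne']
    linarith
  -- the potential of `F₀` and the dual potential
  set u := auxT μ s F₀ with hu
  have huc : Continuous u := auxT_continuous hs hF₀int
  have hu0 : ∀ x, 0 < u x := auxT_pos hs hF₀int hF₀pos hF₀ne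
  have hvc : ∀ r : ℝ, Continuous fun x => u x ^ r :=
    fun r => huc.rpow_const fun x => Or.inl (hu0 x).ne'
  have hv0 : ∀ (r : ℝ) x, 0 < u x ^ r := fun r x => Real.rpow_pos_of_pos (hu0 x) r
  set G := auxT μ s (fun x => u x ^ (q - 1)) with hG
  have hGc : Continuous G := auxT_continuous hs (aux_cont_int (hvc _))
  have hG0 : ∀ x, 0 < G x := auxT_pos hs (aux_cont_int (hvc _)) (fun x => (hv0 _ x).le)
    (aux_ne_zero hμ (hv0 _))
  have hp1' : p - 1 ≠ 0 := by linarith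
  obtain ⟨b, hb, hb1⟩ := hnorm (fun x => G x ^ (1 / (p - 1)))
    (hGc.rpow_const fun x => Or.inl (hG0 x).ne') (fun x => Real.rpow_pos_of_pos (hG0 x) _)
  set F₁ : X → ℝ := fun x => b * G x ^ (1 / (p - 1)) with hF₁
  have hF₁c : Continuous F₁ :=
    continuous_const.mul (hGc.rpow_const fun x => Or.inl (hG0 x).ne')
  have hF₁0 : ∀ x, 0 < F₁ x := fun x => mul_pos hb (Real.rpow_pos_of_pos (hG0 x) _)
  have hF₁int : Integrable F₁ μ := aux_cont_int hF₁c
  have hbp : 0 < b ^ (p - 1) := Real.rpow_pos_of_pos hb _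
  have hF₁pow : ∀ x, F₁ x ^ (p - 1) = b ^ (p - 1) * G x := by
    intro x
    rw [hF₁, Real.mul_rpow hb.le (Real.rpow_nonneg (hG0 x).le _), ← Real.rpow_mul (hG0 x).le,
      one_div_mul_cancel hp1', Real.rpow_one]
  have hw0 : ∀ x, 0 < auxT μ s F₁ x :=
    auxT_pos hs hF₁int (fun x => (hF₁0 x).le) (aux_ne_zero hμ hF₁0)
  have hwc : Continuous (auxT μ s F₁) := auxT_continuous hs hF₁int
  -- minimality
  have hJ : ∫ x, auxT μ s F₁ x ^ q ∂μ ≤ ∫ x, u x ^ q ∂μ := by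
    have h1 := hmin' F₁ hF₁c hF₁0 hb1
    simp only [aux_lint hs hF₀int hF₀pos] at h1
    rw [← hu, aux_lint_pow huc hu0, ENNReal.ofReal_rpow_of_pos (aux_int_pos hμ (hvc q) (hv0 q)),
      ENNReal.ofReal_rpow_of_pos (hTpos F₁ hF₁c hF₁0),
      ENNReal.ofReal_le_ofReal_iff (Real.rpow_nonneg (hTpos F₁ hF₁c hF₁0).le _)] at h1
    exact (Real.rpow_le_rpow_iff_of_neg (aux_int_pos hμ (hvc q) (hv0 q))
      (hTpos F₁ hF₁c hF₁0) hq1).1 h1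
  have hint1 : Integrable (fun x => u x ^ (q - 1) * auxT μ s F₁ x) μ :=
    aux_cont_int ((hvc _).mul hwc)
  have huq : ∀ x, u x ^ (q - 1) * u x = u x ^ q := fun x => by
    rw [← Real.rpow_add_one (hu0 x).ne', sub_add_cancel]
  have htan : ∫ x, (u x ^ q + q * (u x ^ (q - 1) * auxT μ s F₁ x - u x ^ q)) ∂μ
      ≤ ∫ x, auxT μ s F₁ x ^ q ∂μ := by
    refine integral_mono ((aux_cont_int (hvc q)).add
      ((hint1.sub (aux_cont_int (hvc q))).const_mul q))
      (aux_cont_int (hwc.rpow_const fun x => Or.inl (hw0 x).ne')) fun x => ?_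
    have := aux_bern_neg (hu0 x) (hw0 x) hq
    rw [mul_sub, huq] at this
    exact this
  have hint2 : Integrable (fun x => q * (u x ^ (q - 1) * auxT μ s F₁ x - u x ^ q)) μ :=
    (hint1.sub (aux_cont_int (hvc q))).const_mul q
  rw [integral_add (aux_cont_int (hvc q)) hint2,
    integral_const_mul, integral_sub hint1 (aux_cont_int (hvc q)),
    aux_sym hs hF₁int (aux_cont_int (hvc _))] at htan
  have hA : ∫ x, u x ^ q ∂μ = ∫ x, F₀ x * G x ∂μ := by
    rw [← aux_sym hs hF₀int (aux_cont_int (hvc _))]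
    exact integral_congr_ae (Filter.Eventually.of_forall fun x => (huq x).symm)
  have hlin : ∫ x, F₀ x * G x ∂μ ≤ ∫ x, F₁ x * G x ∂μ := by
    rw [← hA]
    by_contra hcon
    push Not at hcon
    have : 0 < q * (∫ x, F₁ x * G x ∂μ - ∫ x, u x ^ q ∂μ) :=
      mul_pos_of_neg_of_neg hq (by linarith)
    linarith
  -- equality in the reversed Hölder inequality
  have hF₀G : Integrable (fun x => F₀ x * G x) μ := by
    obtain ⟨M, hM⟩ := isCompact_univ.exists_bound_of_continuousOn hGc.continuousOn
    exact hF₀int.mul_bdd (c := M) hGc.aestronglyMeasurable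
      (Filter.Eventually.of_forall fun x => hM x (Set.mem_univ x))
  have hF₁G : Integrable (fun x => F₁ x * G x) μ := aux_cont_int (hF₁c.mul hGc)
  have hF₁Lp : Integrable (fun x => F₁ x ^ p) μ :=
    aux_cont_int (hF₁c.rpow_const fun x => Or.inl (hF₁0 x).ne')
  set D : X → ℝ := fun x =>
    (F₁ x ^ p + (p * b ^ (p - 1)) * (F₀ x * G x - F₁ x * G x)) - F₀ x ^ p with hD
  have hDe : ∀ x, D x = (F₁ x ^ p + p * (F₁ x ^ (p - 1) * (F₀ x - F₁ x))) - F₀ x ^ p := by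
    intro x
    rw [hF₁pow x]; simp only [hD]; ring
  have hD0 : ∀ x, 0 ≤ D x := fun x => by
    rw [hDe]; exact sub_nonneg.2 (aux_bern_pos (hF₁0 x) (hF₀pos x) hp0 hp1).1
  have hDi0 : Integrable (fun x => (p * b ^ (p - 1)) * (F₀ x * G x - F₁ x * G x)) μ :=
    (hF₀G.sub hF₁G).const_mul _
  have hDint : Integrable D μ := (hF₁Lp.add hDi0).sub hF₀Lp'
  have hDval : ∫ x, D x ∂μ = p * b ^ (p - 1) * (∫ x, F₀ x * G x ∂μ - ∫ x, F₁ x * G x ∂μ) := by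
    have e1 : ∫ x, D x ∂μ = ∫ x, (F₁ x ^ p + (p * b ^ (p - 1)) * (F₀ x * G x - F₁ x * G x)) ∂μ
        - ∫ x, F₀ x ^ p ∂μ := integral_sub (hF₁Lp.add hDi0) hF₀Lp'
    rw [e1, integral_add hF₁Lp hDi0, integral_const_mul, integral_sub hF₀G hF₁G, hF₀p, hb1]
    ring
  have hDz : ∫ x, D x ∂μ = 0 := by
    refine le_antisymm ?_ (integral_nonneg hD0)
    rw [hDval]
    exact mul_nonpos_of_nonneg_of_nonpos (by positivity) (by linarith)
  have hae : F₀ =ᵐ[μ] F₁ := by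
    filter_upwards [(integral_eq_zero_iff_of_nonneg hD0 hDint).1 hDz] with x hx
    rw [hDe, Pi.zero_apply, sub_eq_zero] at hx
    exact (aux_bern_pos (hF₁0 x) (hF₀pos x) hp0 hp1).2 hx.symm
  refine ⟨?_, ?_⟩
  · have : Nonempty X := by
      by_contra hcon
      rw [not_nonempty_iff] at hcon
      exact hμ (Measure.eq_zero_of_isEmpty μ)
    obtain ⟨x₀, -, hx₀⟩ := isCompact_univ.exists_isMinOn Set.univ_nonempty hF₁c.continuousOn
    refine ⟨F₁ x₀, hF₁0 x₀, ?_⟩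
    filter_upwards [hae] with x hx
    rw [hx]
    exact hx₀ (Set.mem_univ x)
  · have hpq : p - q ≠ 0 := by linarith
    set c : ℝ := (b ^ (p - 1)) ^ (-(1 / (p - q))) with hc
    have hc0 : 0 < c := Real.rpow_pos_of_pos hbp _
    have hcpq : c ^ (p - 1) * b ^ (p - 1) = c ^ (q - 1) := by
      have h1 : c ^ (q - 1) = c ^ (p - 1) * c ^ (-(p - q)) := by
        rw [← Real.rpow_add hc0]; congr 1; ring
      have h2 : c ^ (-(p - q)) = b ^ (p - 1) := by
        rw [hc, ← Real.rpow_mul hbp.le]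
        have : -(1 / (p - q)) * -(p - q) = 1 := by field_simp
        rw [this, Real.rpow_one]
      rw [h1, h2]
    refine ⟨c, hc0, ?_⟩
    filter_upwards [hae] with x hx
    have hT : ∀ η, ∫⁻ ζ, ENNReal.ofReal (c * F₀ ζ * dist η ζ ^ s) ∂μ
        = ENNReal.ofReal (c * u η) := by
      intro η
      rw [aux_lint hs (hF₀int.const_mul c) (fun y => mul_nonneg hc0.le (hF₀pos y))]
      simp only [hu, auxT, mul_assoc, integral_const_mul]
    have hR : ∀ η, (∫⁻ ζ, ENNReal.ofReal (c * F₀ ζ * dist η ζ ^ s) ∂μ) ^ (q - 1) *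
          ENNReal.ofReal (dist x η ^ s)
        = ENNReal.ofReal ((c ^ (q - 1) * u η ^ (q - 1)) * dist x η ^ s) := by
      intro η
      rw [hT, ENNReal.ofReal_rpow_of_pos (mul_pos hc0 (hu0 η)),
        Real.mul_rpow hc0.le (hu0 η).le, ← ENNReal.ofReal_mul
          (mul_nonneg (Real.rpow_nonneg hc0.le _) (hv0 _ η).le)]
    simp only [hR]
    rw [aux_lint hs ((aux_cont_int (hvc _)).const_mul _)
      (fun y => mul_nonneg (Real.rpow_nonneg hc0.le _) (hv0 _ y).le)]
    congr 1
    rw [hx, Real.mul_rpow hc0.le (hF₁0 x).le, hF₁pow, ← mul_assoc, hcpq]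
    simp only [hG, auxT, mul_assoc, integral_const_mul]

end abstractPart

open scoped Pointwise in
lemma aux_noAtoms (n : ℕ) (hn : 1 ≤ n) : NullSingletonClass (sphereMeasure n) := by
  refine ⟨fun x => ?_⟩
  unfold sphereMeasure
  rw [Measure.toSphere_apply' _ (measurableSet_singleton x)]
  have h0 : (volume : Measure (EuclideanSpace ℝ (Fin (n + 1))))
      (Submodule.span ℝ {(x : EuclideanSpace ℝ (Fin (n + 1)))} : Set _) = 0 := by
    refine Measure.addHaar_submodule _ _ fun h => ?_
    have h1 := finrank_span_singleton (K := ℝ) (v := (x : EuclideanSpace ℝ (Fin (n + 1)))) (ne_zero_of_mem_unit_sphere x)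
    rw [h, finrank_top, finrank_euclideanSpace, Fintype.card_fin] at h1
    omega
  have h2 : (volume : Measure (EuclideanSpace ℝ (Fin (n + 1))))
      (Set.Ioo (0 : ℝ) 1 • (Set.image Subtype.val {x})) = 0 := by
    refine measure_mono_null ?_ h0
    rintro y ⟨t, ht, z, ⟨w, hw, rfl⟩, rfl⟩
    rw [Set.mem_singleton_iff] at hw
    subst hw
    exact Submodule.smul_mem _ _ (Submodule.mem_span_singleton_self _)
  rw [h2, mul_zero]

/-- **Lower bound and Euler–Lagrange equation for minimizers** (Section 3.1): for
`1 ≤ n < α`, `p = 2n/(n+α)`, `q = 2n/(n-α)`, a nonnegative minimizer `F₀` of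
`‖Ĩ_α F‖_{L^q(𝕊ⁿ)}` among nonnegative `F` with `‖F‖_{L^p(𝕊ⁿ)} = 1` is bounded below by
a positive constant, and, after multiplication by a suitable positive constant, is a
positive weak solution of
`F₀(ξ)^(p-1) = ∫_{𝕊ⁿ} (Ĩ_α F₀(η))^(q-1) |ξ-η|^(α-n) dη`. -/
theorem minimizer_euler_lagrange (n : ℕ) (hn : 1 ≤ n) (α p q : ℝ)
    (hα : (n : ℝ) < α)
    (hp : p = 2 * n / ((n : ℝ) + α)) (hq : q = 2 * n / ((n : ℝ) - α))
    (F₀ : sphere (0 : EuclideanSpace ℝ (Fin (n + 1))) 1 → ℝ)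
    (hF₀ : Measurable F₀) (hF₀pos : ∀ ξ, 0 ≤ F₀ ξ)
    (hF₀Lp : Integrable (fun ξ => |F₀ ξ| ^ p) (sphereMeasure n))
    (hF₀norm : (∫ ξ, |F₀ ξ| ^ p ∂(sphereMeasure n)) ^ (1 / p) = 1)
    (hmin : ∀ F : sphere (0 : EuclideanSpace ℝ (Fin (n + 1))) 1 → ℝ,
      Measurable F → (∀ ξ, 0 ≤ F ξ) →
      Integrable (fun ξ => |F ξ| ^ p) (sphereMeasure n) →
      (∫ ξ, |F ξ| ^ p ∂(sphereMeasure n)) ^ (1 / p) = 1 →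
      (∫⁻ ξ, (sphereRiesz n α F₀ ξ) ^ q ∂(sphereMeasure n)) ^ (1 / q) ≤
        (∫⁻ ξ, (sphereRiesz n α F ξ) ^ q ∂(sphereMeasure n)) ^ (1 / q)) :
    (∃ c₀ : ℝ, 0 < c₀ ∧ ∀ᵐ ξ ∂(sphereMeasure n), c₀ ≤ F₀ ξ) ∧
    (∃ c : ℝ, 0 < c ∧ ∀ᵐ ξ ∂(sphereMeasure n),
      ENNReal.ofReal ((c * F₀ ξ) ^ (p - 1)) =
        ∫⁻ η, (sphereRiesz n α (fun ζ => c * F₀ ζ) η) ^ (q - 1) *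
          ENNReal.ofReal (dist (ξ : EuclideanSpace ℝ (Fin (n + 1)))
            (η : EuclideanSpace ℝ (Fin (n + 1))) ^ (α - n)) ∂(sphereMeasure n)) := by
  have hn0 : (0 : ℝ) < n := by exact_mod_cast hn
  have hna : (0 : ℝ) < n + α := by linarith
  have hp0 : 0 < p := by rw [hp]; positivity
  have hp1 : p < 1 := by rw [hp, div_lt_one hna]; linarith
  have hq0 : q < 0 := by rw [hq]; exact div_neg_of_pos_of_neg (by positivity) (by linarith)
  have := aux_noAtoms n hn
  have : IsFiniteMeasure (sphereMeasure n) := by unfold sphereMeasure; infer_instance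
  have hμ : sphereMeasure n ≠ 0 := Measure.toSphere_ne_zero _
  exact aux_main hμ (s := α - n) (by linarith) hp0 hp1 hq0 F₀ hF₀ hF₀pos hF₀Lp hF₀norm hmin
end

section
/- Let 1 ≤ n < α and θ, κ < 0. Suppose (u, v) is a pair of positive Lebesgue measurable functions on ℝⁿ, not identically +∞, satisfying u(y) = ∫_{ℝⁿ}|x−y|^{α−n} v(x)^κ dx for all y ∈ ℝⁿ and v(x) = ∫_{ℝⁿ}|x−y|^{α−n} u(y)^θ dy for all x ∈ ℝⁿ. Then u and v are smooth: u, v ∈ C^∞(ℝⁿ). -/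
open MeasureTheory ENNReal

namespace SmoothSys
set_option linter.unusedSectionVars false
open Set Filter Topology Metric

variable {E : Type} [NormedAddCommGroup E] [InnerProductSpace ℝ E]

/-- Smooth away from zero and positively homogeneous of degree `q`. -/
structure HomSm {G : Type} [NormedAddCommGroup G] [NormedSpace ℝ G] (q : ℝ) (F : E → G) : Prop where
  smooth : ContDiffOn ℝ (⊤ : ℕ∞) F {0}ᶜ
  hom : ∀ c : ℝ, 0 < c → ∀ x : E, F (c • x) = c ^ q • F x ∨ x = 0

theorem homSm_norm (p : ℝ) : HomSm p (fun x : E => ‖x‖ ^ p) := by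
  constructor
  · intro x hx
    have hx' : x ≠ 0 := hx
    exact ((contDiffAt_norm ℝ hx').rpow_const_of_ne (by simpa using hx')).contDiffWithinAt
  · intro c hc x
    left
    simp only [norm_smul, Real.norm_of_nonneg hc.le, smul_eq_mul]
    rw [Real.mul_rpow hc.le (norm_nonneg _)]

variable {G : Type} [NormedAddCommGroup G] [NormedSpace ℝ G]

theorem HomSm.fderiv {q : ℝ} {F : E → G} (h : HomSm q F) : HomSm (q - 1) (fderiv ℝ F) := by
  constructor
  · exact ((contDiffOn_infty_iff_fderiv_of_isOpen isOpen_compl_singleton).1 h.smooth).2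
  · intro c hc x
    by_cases hx : x = 0
    · right; exact hx
    left
    have h1 : (fun y => F (c • y)) =ᶠ[𝓝 x] fun y => c ^ q • F y := by
      filter_upwards [isOpen_compl_singleton.mem_nhds (show x ∈ ({0}ᶜ : Set E) from hx)] with y hy
      exact (h.hom c hc y).resolve_right hy
    have h2 := h1.fderiv_eq (𝕜 := ℝ)
    rw [fderiv_comp_smul, show (fun y => c ^ q • F y) = c ^ q • F from rfl, fderiv_const_smul_field] at h2
    rw [Real.rpow_sub_one hc.ne', div_eq_inv_mul, mul_smul]
    change _ = c⁻¹ • (c ^ q • _root_.fderiv ℝ F x)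
    rw [← show _ = c ^ q • _root_.fderiv ℝ F x from h2, inv_smul_smul₀ hc.ne']

theorem HomSm.bound [FiniteDimensional ℝ E] {q : ℝ} {F : E → G} (h : HomSm q F) :
    ∃ C : ℝ, 0 ≤ C ∧ ∀ x, x ≠ 0 → ‖F x‖ ≤ C * ‖x‖ ^ q := by
  have hc : IsCompact (sphere (0 : E) 1) := isCompact_sphere 0 1
  obtain ⟨C, hC⟩ := hc.exists_bound_of_continuousOn
    (h.smooth.continuousOn.mono (fun x hx => by
      simp only [mem_sphere_iff_norm, sub_zero] at hx
      intro h0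
      simp only [mem_singleton_iff] at h0
      simp [h0] at hx))
  refine ⟨max C 0, le_max_right _ _, fun x hx => ?_⟩
  have hn : 0 < ‖x‖ := norm_pos_iff.2 hx
  have h1 := (h.hom ‖x‖ hn (‖x‖⁻¹ • x)).resolve_right (by simp [hx])
  rw [smul_inv_smul₀ hn.ne'] at h1
  rw [h1, norm_smul, Real.norm_of_nonneg (by positivity), mul_comm]
  gcongr
  refine (hC _ ?_).trans (le_max_left _ _)
  simp [norm_smul, hn.ne']

variable [FiniteDimensional ℝ E] [MeasurableSpace E] [BorelSpace E] (μ : Measure E)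

section far
variable {p R : ℝ} {f : E → ℝ}

theorem far_meas {q : ℝ} {F : E → G} (h : HomSm q F)
    (hf : AEStronglyMeasurable f μ) (hfR : ∀ x, ‖x‖ < R + 1 → f x = 0) {y : E} (hy : ‖y‖ < R) :
    AEStronglyMeasurable (fun x => f x • F (y - x)) μ := by
  have hS : MeasurableSet {x : E | R + 1 ≤ ‖x‖} :=
    (isClosed_le continuous_const continuous_norm).measurableSet
  have e : (fun x => f x • F (y - x)) =
      indicator {x : E | R + 1 ≤ ‖x‖} (fun x => f x • F (y - x)) := by
    ext x
    by_cases hx : R + 1 ≤ ‖x‖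
    · rw [indicator_of_mem (by exact hx)]
    · rw [indicator_of_notMem (by exact hx), hfR x (not_le.1 hx), zero_smul]
  rw [e, aestronglyMeasurable_indicator_iff hS]
  refine hf.restrict.smul (ContinuousOn.aestronglyMeasurable ?_ hS)
  refine h.smooth.continuousOn.comp (by fun_prop) ?_
  intro x hx
  simp only [mem_ofPred_eq] at hx
  simp only [mem_compl_iff, mem_singleton_iff, sub_eq_zero]
  rintro rfl
  linarith

theorem far_bound (hp : 0 < p) (hR : 0 < R) {q : ℝ} (hq : q ≤ p) {F : E → G} (h : HomSm q F)
    (hfR : ∀ x, ‖x‖ < R + 1 → f x = 0) :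
    ∃ C : ℝ, ∀ x y, ‖y‖ < R → ‖f x • F (y - x)‖ ≤ C * ‖(1 + ‖x‖) ^ p * f x‖ := by
  obtain ⟨C, hC, hb⟩ := h.bound
  refine ⟨C * (R + 1) ^ p, fun x y hy => ?_⟩
  by_cases hx : ‖x‖ < R + 1
  · simp [hfR x hx]
  push Not at hx
  have h1 : 1 ≤ ‖y - x‖ := by
    have := norm_sub_norm_le x y
    rw [norm_sub_rev] at this; linarith
  have h2 : ‖y - x‖ ≤ (R + 1) * (1 + ‖x‖) := by
    have := norm_sub_le y x
    nlinarith [norm_nonneg x]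
  have h0 : y - x ≠ 0 := by
    intro h0; rw [h0, norm_zero] at h1; linarith
  have h3 : ‖y - x‖ ^ q ≤ (R + 1) ^ p * (1 + ‖x‖) ^ p := by
    rw [← Real.mul_rpow (by positivity) (by positivity)]
    exact (Real.rpow_le_rpow_of_exponent_le h1 hq).trans
      (Real.rpow_le_rpow (by positivity) h2 hp.le)
  rw [norm_smul, norm_mul, Real.norm_of_nonneg (show 0 ≤ (1 + ‖x‖) ^ p by positivity)]
  calc ‖f x‖ * ‖F (y - x)‖ ≤ ‖f x‖ * (C * ((R + 1) ^ p * (1 + ‖x‖) ^ p)) := by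
        gcongr
        exact (hb _ h0).trans (by gcongr)
    _ = _ := by ring

theorem far_hasFDerivAt (hp : 0 < p) (hR : 0 < R) {q : ℝ} (hq : q ≤ p) {F : E → G}
    (h : HomSm q F) (hf : AEStronglyMeasurable f μ)
    (hint : Integrable (fun x => (1 + ‖x‖) ^ p * f x) μ)
    (hfR : ∀ x, ‖x‖ < R + 1 → f x = 0) {y : E} (hy : ‖y‖ < R) :
    HasFDerivAt (fun y => ∫ x, f x • F (y - x) ∂μ) (∫ x, f x • fderiv ℝ F (y - x) ∂μ) y := by
  obtain ⟨C, hC⟩ := far_bound hp hR hq h hfR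
  obtain ⟨C', hC'⟩ := far_bound hp hR (show q - 1 ≤ p by linarith) h.fderiv hfR
  have hs : ball (0 : E) R ∈ 𝓝 y := isOpen_ball.mem_nhds (by simpa using hy)
  refine hasFDerivAt_integral_of_dominated_of_fderiv_le (𝕜 := ℝ) (s := ball 0 R)
    (F := fun y x => f x • F (y - x)) (F' := fun y x => f x • fderiv ℝ F (y - x))
    (bound := fun x => C' * ‖(1 + ‖x‖) ^ p * f x‖) hs ?_ ?_ ?_ ?_ ?_ ?_
  · filter_upwards [hs] with z hz
    exact far_meas μ h hf hfR (by simpa using hz)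
  · exact (hint.norm.const_mul C).mono' (far_meas μ h hf hfR hy) (.of_forall fun x => hC x y hy)
  · exact far_meas μ h.fderiv hf hfR hy
  · exact .of_forall fun x z hz => hC' x z (by simpa using hz)
  · exact hint.norm.const_mul C'
  · refine .of_forall fun x z hz => ?_
    by_cases hx : ‖x‖ < R + 1
    · simp only [hfR x hx, zero_smul]
      exact hasFDerivAt_const _ _
    have h0 : z - x ∈ ({0}ᶜ : Set E) := by
      simp only [mem_compl_iff, mem_singleton_iff, sub_eq_zero]
      rintro rfl
      simp only [mem_ball, dist_zero_right] at hz
      linarith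
    have h1 : HasFDerivAt F (fderiv ℝ F (z - x)) (z - x) :=
      ((h.smooth.contDiffAt (isOpen_compl_singleton.mem_nhds h0)).differentiableAt
        (by simp)).hasFDerivAt
    have h2 : HasFDerivAt (fun w => F (w - x)) (fderiv ℝ F (z - x)) z := by
      simpa [Function.comp_def] using h1.comp z ((hasFDerivAt_id z).sub_const x)
    exact h2.const_smul (f x)

theorem far_contDiffOn (hp : 0 < p) (hR : 0 < R) (hf : AEStronglyMeasurable f μ)
    (hint : Integrable (fun x => (1 + ‖x‖) ^ p * f x) μ)
    (hfR : ∀ x, ‖x‖ < R + 1 → f x = 0) (m : ℕ) :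
    ∀ {G : Type} [NormedAddCommGroup G] [NormedSpace ℝ G] {q : ℝ} (_ : q ≤ p) {F : E → G}
      (_ : HomSm q F),
      ContDiffOn ℝ m (fun y => ∫ x, f x • F (y - x) ∂μ) (ball 0 R) := by
  induction m with
  | zero =>
    intro G _ _ q hq F h
    refine contDiffOn_zero.2 fun y hy => ?_
    exact (far_hasFDerivAt μ hp hR hq h hf hint hfR
      (by simpa using hy)).continuousAt.continuousWithinAt
  | succ m ih =>
    intro G _ _ q hq F h
    push_cast
    rw [contDiffOn_succ_iff_hasFDerivWithinAt_of_uniqueDiffOn isOpen_ball.uniqueDiffOn]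
    refine ⟨by simp, _, ih (show q - 1 ≤ p by linarith) h.fderiv, fun y hy => ?_⟩
    exact (far_hasFDerivAt μ hp hR hq h hf hint hfR (by simpa using hy)).hasFDerivWithinAt
end far

section near
variable {p : ℝ} {h : E → ℝ}

theorem near_smooth [IsFiniteMeasureOnCompacts μ] (hc : Continuous h) (hs : HasCompactSupport h)
    {K : E → ℝ} {K' : E → E →L[ℝ] ℝ}
    (hK' : Continuous K') (hK : ∀ x, HasFDerivAt K (K' x) x) (y : E) :
    HasFDerivAt (fun y => ∫ x, h x • K (y - x) ∂μ) (∫ x, h x • K' (y - x) ∂μ) y := by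
  have hKc : Continuous K := continuous_iff_continuousAt.2 fun x => (hK x).continuousAt
  obtain ⟨r, hr⟩ := hs.isCompact.isBounded.subset_closedBall (0 : E)
  obtain ⟨C, hC⟩ := (isCompact_closedBall (0 : E) (‖y‖ + 1 + r)).exists_bound_of_continuousOn
    hK'.continuousOn
  have hi : Integrable h μ := hc.integrable_of_hasCompactSupport hs
  refine hasFDerivAt_integral_of_dominated_of_fderiv_le (𝕜 := ℝ) (s := ball y 1)
    (F := fun y x => h x • K (y - x)) (F' := fun y x => h x • K' (y - x))
    (bound := fun x => ‖h x‖ * C) (ball_mem_nhds y one_pos) ?_ ?_ ?_ ?_ ?_ ?_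
  · refine .of_forall fun z => Continuous.aestronglyMeasurable ?_
    fun_prop
  · refine Continuous.integrable_of_hasCompactSupport (by fun_prop) hs.smul_right
  · refine Continuous.aestronglyMeasurable ?_
    fun_prop
  · refine .of_forall fun x z hz => ?_
    by_cases hx : h x = 0
    · simp [hx]
    rw [norm_smul]
    gcongr
    apply hC
    have h1 := hr (subset_tsupport h hx)
    simp only [mem_closedBall, dist_zero_right] at h1 ⊢
    have h2 : ‖z - y‖ < 1 := by simpa [dist_eq_norm] using hz
    calc ‖z - x‖ = ‖(z - y) + y - x‖ := by congr 1; abel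
      _ ≤ ‖z - y‖ + ‖y‖ + ‖x‖ := (norm_sub_le _ _).trans (by gcongr; exact norm_add_le _ _)
      _ ≤ _ := by linarith
  · exact hi.norm.mul_const C
  · refine .of_forall fun x z hz => ?_
    have h2 : HasFDerivAt (fun w => K (w - x)) (K' (z - x)) z := by
      simpa [Function.comp_def] using (hK (z - x)).comp z ((hasFDerivAt_id z).sub_const x)
    exact h2.const_smul (h x)

/-- The gradient kernel of `‖x‖ ^ p`. -/
noncomputable def DK (p : ℝ) (x : E) : E →L[ℝ] ℝ := (p * (‖x‖ ^ 2) ^ (p / 2 - 1)) • innerSL ℝ x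

/-- The gradient kernel of the regularised kernel. -/
noncomputable def DKe (p ε : ℝ) (x : E) : E →L[ℝ] ℝ :=
  (p * (‖x‖ ^ 2 + ε ^ 2) ^ (p / 2 - 1)) • innerSL ℝ x

theorem continuous_DKe {ε : ℝ} (hε : 0 < ε) : Continuous (DKe p ε : E → E →L[ℝ] ℝ) := by
  unfold DKe
  have h1 : Continuous fun x : E => (‖x‖ ^ 2 + ε ^ 2) ^ (p / 2 - 1) :=
    Continuous.rpow_const (by fun_prop) fun x => Or.inl (by positivity)
  exact Continuous.smul (continuous_const.mul h1) (innerSL ℝ (E := E)).continuous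

theorem hasFDerivAt_Ke {ε : ℝ} (hε : 0 < ε) (x : E) :
    HasFDerivAt (fun x : E => (‖x‖ ^ 2 + ε ^ 2) ^ (p / 2)) (DKe p ε x) x := by
  have h1 := ((hasStrictFDerivAt_norm_sq x).hasFDerivAt.add_const (ε ^ 2)).rpow_const (p := p / 2)
    (Or.inl (by positivity))
  convert! h1 using 1
  unfold DKe
  rw [← Nat.cast_smul_eq_nsmul ℝ, smul_smul]
  congr 1
  push_cast
  ring

/-- Dominating function for the gradient kernels. -/
noncomputable def BK (p : ℝ) (x : E) : ℝ := p * (‖x‖ ^ (p - 1) + (‖x‖ ^ 2 + 1) ^ ((p - 1) / 2))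

theorem norm_DKe_le (hp : 0 < p) {ε : ℝ} (hε : 0 < ε) (hε1 : ε ≤ 1) (x : E) :
    ‖DKe p ε x‖ ≤ BK p x := by
  unfold DKe BK
  rw [norm_smul, innerSL_apply_norm, Real.norm_of_nonneg (by positivity), mul_assoc]
  gcongr
  rcases eq_or_ne x 0 with rfl | hx
  · simp only [norm_zero, mul_zero]; positivity
  have hn : 0 < ‖x‖ := norm_pos_iff.2 hx
  have hb : 0 < ‖x‖ ^ 2 + ε ^ 2 := by positivity
  have h1 : ‖x‖ ≤ (‖x‖ ^ 2 + ε ^ 2) ^ (1 / 2 : ℝ) := by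
    rw [← Real.sqrt_eq_rpow]
    exact Real.le_sqrt_of_sq_le (by nlinarith)
  have h2 : (‖x‖ ^ 2 + ε ^ 2) ^ (p / 2 - 1) * ‖x‖ ≤ (‖x‖ ^ 2 + ε ^ 2) ^ ((p - 1) / 2) := by
    calc _ ≤ (‖x‖ ^ 2 + ε ^ 2) ^ (p / 2 - 1) * (‖x‖ ^ 2 + ε ^ 2) ^ (1 / 2 : ℝ) := by gcongr
      _ = _ := by rw [← Real.rpow_add hb]; congr 1; ring
  refine h2.trans ?_
  rcases le_or_gt 1 p with h | h
  · have : (‖x‖ ^ 2 + ε ^ 2) ^ ((p - 1) / 2) ≤ (‖x‖ ^ 2 + 1) ^ ((p - 1) / 2) := by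
      apply Real.rpow_le_rpow hb.le _ (by linarith)
      nlinarith
    have : 0 ≤ ‖x‖ ^ (p - 1) := by positivity
    linarith
  · have : (‖x‖ ^ 2 + ε ^ 2) ^ ((p - 1) / 2) ≤ (‖x‖ ^ 2) ^ ((p - 1) / 2) := by
      apply Real.rpow_le_rpow_of_nonpos (by positivity) _ (by linarith)
      nlinarith
    have e : (‖x‖ ^ 2) ^ ((p - 1) / 2) = ‖x‖ ^ (p - 1) := by
      rw [← Real.rpow_natCast_mul hn.le]; congr 1; push_cast; ring
    have : 0 ≤ (‖x‖ ^ 2 + 1) ^ ((p - 1) / 2) := by positivity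
    linarith

theorem tendsto_DKe (x : E) {ι : Type} {l : Filter ι} {ε : ι → ℝ} (hε : Tendsto ε l (𝓝 0)) :
    Tendsto (fun j => DKe p (ε j) x) l (𝓝 (DK p x)) := by
  unfold DKe DK
  rcases eq_or_ne x 0 with rfl | hx
  · simpa using tendsto_const_nhds
  refine Filter.Tendsto.smul_const (Filter.Tendsto.const_mul _ ?_) _
  have h1 : Tendsto (fun j => ‖x‖ ^ 2 + ε j ^ 2) l (𝓝 (‖x‖ ^ 2)) := by
    simpa using (hε.pow 2).const_add (‖x‖ ^ 2)
  exact h1.rpow_const (Or.inl (by simpa using hx))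

theorem norm_DK_le (hp : 0 < p) (x : E) : ‖DK p x‖ ≤ BK p x := by
  have h0 : Tendsto (fun j : ℕ => 1 / ((j : ℝ) + 1)) atTop (𝓝 0) := tendsto_one_div_add_atTop_nhds_zero_nat
  refine le_of_tendsto (tendsto_DKe (p := p) x h0).norm (.of_forall fun j => ?_)
  refine norm_DKe_le hp (by positivity) ?_ x
  rw [div_le_one (by positivity)]
  linarith [j.cast_nonneg (α := ℝ)]

theorem measurable_DK : Measurable (DK p : E → E →L[ℝ] ℝ) := by
  unfold DK
  have h1 : Measurable fun x : E => p * (‖x‖ ^ 2) ^ (p / 2 - 1) := by fun_prop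
  exact h1.smul (innerSL ℝ (E := E)).continuous.measurable

theorem integrableOn_BK [Nontrivial E] [μ.IsAddHaarMeasure] (hp : 0 < p) (r : ℝ) :
    IntegrableOn (BK p) (ball (0 : E) r) μ := by
  unfold BK
  refine Integrable.const_mul (Integrable.add ?_ ?_) p
  · change IntegrableOn (fun x : E => (fun s : ℝ => s ^ (p - 1)) ‖x‖) (ball 0 r) μ
    rw [integrableOn_fun_norm_addHaar μ (f := fun s : ℝ => s ^ (p - 1))]
    rcases le_or_gt r 0 with hr | hr
    · simp [Ioo_eq_empty (not_lt.2 hr)]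
    have hd : 1 ≤ Module.finrank ℝ E := Module.finrank_pos
    have : IntegrableOn (fun y : ℝ => y ^ ((Module.finrank ℝ E - 1 : ℕ) + (p - 1) : ℝ)) (Ioo 0 r) := by
      rw [intervalIntegral.integrableOn_Ioo_rpow_iff hr]
      have : (0 : ℝ) ≤ (Module.finrank ℝ E - 1 : ℕ) := Nat.cast_nonneg _
      linarith
    refine this.congr_fun (fun y hy => ?_) measurableSet_Ioo
    simp only [smul_eq_mul]
    rw [Real.rpow_add hy.1, Real.rpow_natCast]
  · have : Continuous (fun x : E => (‖x‖ ^ 2 + 1) ^ ((p - 1) / 2)) :=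
      Continuous.rpow_const (by fun_prop) fun x => Or.inl (by positivity)
    exact (this.continuousOn.integrableOn_compact (isCompact_closedBall 0 r)).mono_set
      ball_subset_closedBall

theorem integrableOn_DK [Nontrivial E] [μ.IsAddHaarMeasure] (hp : 0 < p) (r : ℝ) :
    IntegrableOn (DK p) (ball (0 : E) r) μ :=
  (integrableOn_BK μ hp r).mono' measurable_DK.aestronglyMeasurable
    (.of_forall fun x => norm_DK_le hp x)

theorem locallyIntegrable_DK [Nontrivial E] [μ.IsAddHaarMeasure] (hp : 0 < p) :
    LocallyIntegrable (DK p : E → E →L[ℝ] ℝ) μ := by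
  intro x
  refine ⟨ball 0 (‖x‖ + 1), isOpen_ball.mem_nhds (by simp), integrableOn_DK μ hp _⟩

theorem near_hasFDerivAt [Nontrivial E] [μ.IsAddHaarMeasure] (hp : 0 < p) (hc : Continuous h)
    (hs : HasCompactSupport h) (y : E) :
    HasFDerivAt (fun y => ∫ x, h x • ‖y - x‖ ^ p ∂μ) (∫ x, h x • DK p (y - x) ∂μ) y := by
  obtain ⟨r, hr⟩ := hs.isCompact.isBounded.subset_closedBall (0 : E)
  obtain ⟨M, hM⟩ := hc.bounded_above_of_compact_support hs
  have hM0 : 0 ≤ M := (norm_nonneg _).trans (hM 0)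
  set R := ‖y‖ + 1
  set ε : ℕ → ℝ := fun j => 1 / ((j : ℝ) + 1) with hεdef
  have hε0 : Tendsto ε atTop (𝓝 0) := tendsto_one_div_add_atTop_nhds_zero_nat
  have hεp : ∀ j, 0 < ε j := fun j => by simp only [hεdef]; positivity
  have hε1 : ∀ j, ε j ≤ 1 := fun j => by
    simp only [hεdef]
    rw [div_le_one (by positivity)]
    linarith [j.cast_nonneg (α := ℝ)]
  -- swap the integrals
  have sw : ∀ (K' : E → E →L[ℝ] ℝ) (z : E),
      ∫ x, h x • K' (z - x) ∂μ = ∫ t, h (z - t) • K' t ∂μ := by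
    intro K' z
    rw [← integral_sub_left_eq_self _ μ z]
    simp
  have hsup : ∀ z ∈ ball (0 : E) R, ∀ t, t ∉ ball (0 : E) (R + r + 1) → h (z - t) = 0 := by
    intro z hz t ht
    by_contra h0
    have h1 := hr (subset_tsupport h h0)
    simp only [mem_closedBall, dist_zero_right, mem_ball, not_lt] at h1 hz ht
    have := norm_sub_norm_le t z
    rw [norm_sub_rev] at this
    linarith
  have hintK : ∀ (K' : E → E →L[ℝ] ℝ), IntegrableOn K' (ball 0 (R + r + 1)) μ → ∀ z ∈ ball (0 : E) R,
      Integrable (fun t => h (z - t) • K' t) μ := by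
    intro K' hK' z hz
    have e : (fun t => h (z - t) • K' t) =
        fun t => h (z - t) • (indicator (ball 0 (R + r + 1)) K' t) := by
      ext1 t
      by_cases ht : t ∈ ball (0 : E) (R + r + 1)
      · rw [indicator_of_mem ht]
      · rw [hsup z hz t ht]; simp
    rw [e]
    exact ((integrable_indicator_iff measurableSet_ball).2 hK').bdd_smul M
      (Continuous.aestronglyMeasurable (by fun_prop)) (.of_forall fun t => hM _)
  have hDe : ∀ j, IntegrableOn (DKe p (ε j)) (ball (0 : E) (R + r + 1)) μ := fun j =>
    (integrableOn_BK μ hp _).mono' (continuous_DKe (hεp j)).aestronglyMeasurable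
      (.of_forall fun x => norm_DKe_le hp (hεp j) (hε1 j) x)
  have hD := integrableOn_DK μ hp (E := E) (R + r + 1)
  -- L¹ convergence
  have hL1 : Tendsto (fun j => ∫ t in ball (0 : E) (R + r + 1), ‖DKe p (ε j) t - DK p t‖ ∂μ) atTop
      (𝓝 0) := by
    rw [← integral_zero E ℝ (μ := μ.restrict (ball (0 : E) (R + r + 1)))]
    refine tendsto_integral_of_dominated_convergence (fun t => BK p t + BK p t)
      (fun j => ((hDe j).sub hD).norm.aestronglyMeasurable)
      ((integrableOn_BK μ hp _).add (integrableOn_BK μ hp _)) ?_ ?_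
    · refine fun j => .of_forall fun t => ?_
      rw [norm_norm]
      exact (norm_sub_le _ _).trans
        (add_le_add (norm_DKe_le hp (hεp j) (hε1 j) t) (norm_DK_le hp t))
    · refine .of_forall fun t => ?_
      have := ((tendsto_DKe (p := p) t hε0).sub_const (DK p t)).norm
      simpa using this
  refine hasFDerivAt_of_tendstoUniformlyOn (𝕜 := ℝ) (l := atTop) (s := ball 0 R)
    (f := fun j y => ∫ x, h x • (‖y - x‖ ^ 2 + ε j ^ 2) ^ (p / 2) ∂μ)
    (f' := fun j y => ∫ x, h x • DKe p (ε j) (y - x) ∂μ)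
    (g' := fun y => ∫ x, h x • DK p (y - x) ∂μ)
    isOpen_ball ?_ ?_ ?_ (by simp [R])
  · rw [Metric.tendstoUniformlyOn_iff]
    intro δ hδ
    have h1 : ∀ᶠ j in atTop,
        M * ∫ t in ball (0 : E) (R + r + 1), ‖DKe p (ε j) t - DK p t‖ ∂μ < δ := by
      have := hL1.const_mul M
      rw [mul_zero] at this
      exact this.eventually (gt_mem_nhds hδ)
    filter_upwards [h1] with j hj z hz
    rw [dist_comm, dist_eq_norm, sw, sw, ← integral_sub (hintK _ (hDe j) z hz) (hintK _ hD z hz)]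
    refine lt_of_le_of_lt ?_ hj
    rw [← integral_const_mul, ← integral_indicator measurableSet_ball]
    refine norm_integral_le_of_norm_le ?_ (.of_forall fun t => ?_)
    · exact (integrable_indicator_iff measurableSet_ball).2 (((hDe j).sub hD).norm.const_mul M)
    · by_cases ht : t ∈ ball (0 : E) (R + r + 1)
      · rw [indicator_of_mem ht, show h (z - t) • DKe p (ε j) t - h (z - t) • DK p t =
          h (z - t) • (DKe p (ε j) t - DK p t) from (smul_sub _ _ _).symm, norm_smul]
        gcongr
        exact hM _
      · rw [indicator_of_notMem ht, hsup z hz t ht]; simp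
  · intro j z hz
    exact near_smooth μ hc hs (continuous_DKe (hεp j)) (hasFDerivAt_Ke (hεp j)) z
  · intro z hz
    have hcp : Continuous fun x : E => (‖z - x‖ ^ 2 + 1) ^ (p / 2) :=
      Continuous.rpow_const (by fun_prop) fun x => Or.inr (by positivity)
    refine tendsto_integral_of_dominated_convergence
      (fun x => ‖h x‖ * (‖z - x‖ ^ 2 + 1) ^ (p / 2)) ?_ ?_ ?_ ?_
    · intro j
      refine Continuous.aestronglyMeasurable (hc.smul ?_)
      exact Continuous.rpow_const (by fun_prop) fun x => Or.inr (by positivity)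
    · exact (hc.norm.mul hcp).integrable_of_hasCompactSupport hs.norm.mul_right
    · refine fun j => .of_forall fun x => ?_
      rw [norm_smul, Real.norm_of_nonneg (show 0 ≤ (‖z - x‖ ^ 2 + ε j ^ 2) ^ (p / 2) by positivity)]
      have := hε1 j
      have := hεp j
      gcongr
      nlinarith
    · refine .of_forall fun x => Tendsto.const_smul ?_ _
      have h1 : Tendsto (fun j => ‖z - x‖ ^ 2 + ε j ^ 2) atTop (𝓝 (‖z - x‖ ^ 2)) := by
        simpa using (hε0.pow 2).const_add (‖z - x‖ ^ 2)
      have h2 := h1.rpow_const (p := p / 2) (Or.inr (by positivity))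
      have e : (‖z - x‖ ^ 2) ^ (p / 2) = ‖z - x‖ ^ p := by
        rw [← Real.rpow_natCast_mul (norm_nonneg _)]; congr 1; push_cast; ring
      rwa [e] at h2

theorem near_contDiff [Nontrivial E] [μ.IsAddHaarMeasure] (hp : 0 < p) (m : ℕ)
    (hc : ContDiff ℝ m h) (hs : HasCompactSupport h) :
    ContDiff ℝ (m + 1) (fun y => ∫ x, h x • ‖y - x‖ ^ p ∂μ) := by
  rw [contDiff_succ_iff_hasFDerivAt]
  refine ⟨_, ?_, near_hasFDerivAt μ hp hc.continuous hs⟩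
  have := hs.contDiff_convolution_right (n := m) (ContinuousLinearMap.lsmul ℝ ℝ).flip
    (locallyIntegrable_DK μ hp) hc (𝕜 := ℝ)
  convert! this using 1
  ext1 y
  rw [convolution_eq_swap]
  rfl

end near

section final
variable {p : ℝ} {f : E → ℝ}

theorem step_contDiff [Nontrivial E] [μ.IsAddHaarMeasure] (hp : 0 < p) (m : ℕ)
    (hf : ContDiff ℝ m f) (hint : Integrable (fun x => (1 + ‖x‖) ^ p * f x) μ) :
    ContDiff ℝ (m + 1) (fun y => ∫ x, f x • ‖y - x‖ ^ p ∂μ) := by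
  rw [contDiff_iff_contDiffAt]
  intro y
  set R := ‖y‖ + 1 with hRdef
  have hR : 0 < R := by positivity
  let χ : ContDiffBump (0 : E) := ⟨R + 1, R + 2, by linarith, by linarith⟩
  have hχ : ContDiff ℝ m χ := χ.contDiff
  have hχ0 : ∀ x, ‖x‖ < R + 1 → χ x = 1 := fun x hx =>
    χ.one_of_mem_closedBall (by simpa using hx.le)
  set h : E → ℝ := fun x => χ x * f x with hh
  set g : E → ℝ := fun x => (1 - χ x) * f x with hg
  have hhc : ContDiff ℝ m h := hχ.mul hf
  have hhs : HasCompactSupport h := χ.hasCompactSupport.mul_right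
  have hgc : Continuous g := (continuous_const.sub hχ.continuous).mul hf.continuous
  have hgR : ∀ x, ‖x‖ < R + 1 → g x = 0 := fun x hx => by simp [hg, hχ0 x hx]
  have hgi : Integrable (fun x => (1 + ‖x‖) ^ p * g x) μ := by
    have hpc : Continuous fun x : E => (1 + ‖x‖) ^ p :=
      Continuous.rpow_const (by fun_prop) fun x => Or.inr hp.le
    refine hint.mono (hpc.mul hgc).aestronglyMeasurable (.of_forall fun x => ?_)
    simp only [hg, norm_mul]
    gcongr
    have h1 : ‖1 - χ x‖ ≤ 1 := by
      rw [Real.norm_eq_abs, abs_le]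
      constructor <;> linarith [χ.nonneg' x, χ.le_one (x := x)]
    calc _ ≤ 1 * ‖f x‖ := by gcongr
      _ = _ := one_mul _
  have hN := near_contDiff μ hp m hhc hhs
  have hF := far_contDiffOn μ hp hR hgc.aestronglyMeasurable hgi hgR (m + 1) le_rfl
    (homSm_norm (E := E) p)
  have hy : ball (0 : E) R ∈ 𝓝 y := isOpen_ball.mem_nhds (by simp [hRdef])
  refine (hN.contDiffAt.add (hF.contDiffAt hy)).congr_of_eventuallyEq ?_
  filter_upwards [hy] with z hz
  obtain ⟨C, hC⟩ := far_bound hp hR le_rfl (homSm_norm (E := E) p) hgR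
  have hz' : ‖z‖ < R := by simpa using hz
  have i1 : Integrable (fun x => h x • ‖z - x‖ ^ p) μ := by
    refine Continuous.integrable_of_hasCompactSupport (hhc.continuous.smul ?_) hhs.smul_right
    exact Continuous.rpow_const (by fun_prop) fun x => Or.inr hp.le
  have i2 : Integrable (fun x => g x • ‖z - x‖ ^ p) μ :=
    (hgi.norm.const_mul C).mono'
      (far_meas μ (homSm_norm (E := E) p) hgc.aestronglyMeasurable hgR hz')
      (.of_forall fun x => hC x z hz')
  change _ = (∫ x, h x • ‖z - x‖ ^ p ∂μ) + ∫ x, g x • ‖z - x‖ ^ p ∂μ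
  rw [← integral_add i1 i2]
  congr 1
  ext x
  simp only [hh, hg, smul_eq_mul]
  ring

theorem base_continuous (hp : 0 < p) (hf : AEStronglyMeasurable f μ)
    (hint : Integrable (fun x => (1 + ‖x‖) ^ p * f x) μ) :
    Continuous (fun y => ∫ x, f x • ‖y - x‖ ^ p ∂μ) := by
  have hpc : ∀ y : E, Continuous fun x : E => ‖y - x‖ ^ p := fun y =>
    Continuous.rpow_const (by fun_prop) fun x => Or.inr hp.le
  rw [continuous_iff_continuousAt]
  intro y
  refine continuousAt_of_dominated
    (bound := fun x => (‖y‖ + 1 + 1) ^ p * ‖(1 + ‖x‖) ^ p * f x‖) ?_ ?_ ?_ ?_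
  · exact .of_forall fun z => hf.smul (hpc z).aestronglyMeasurable
  · have hy : ball (0 : E) (‖y‖ + 1) ∈ 𝓝 y := isOpen_ball.mem_nhds (by simp)
    filter_upwards [hy] with z hz
    refine .of_forall fun x => ?_
    have hz' : ‖z‖ < ‖y‖ + 1 := by simpa using hz
    have h2 : ‖z - x‖ ≤ (‖y‖ + 1 + 1) * (1 + ‖x‖) := by
      have := norm_sub_le z x
      nlinarith [norm_nonneg x, norm_nonneg y, mul_nonneg (norm_nonneg x) (norm_nonneg y)]
    rw [norm_smul, norm_mul, Real.norm_of_nonneg (show 0 ≤ (1 + ‖x‖) ^ p by positivity),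
      Real.norm_of_nonneg (show 0 ≤ ‖z - x‖ ^ p by positivity), ← mul_assoc,
      ← Real.mul_rpow (by positivity) (by positivity), mul_comm]
    gcongr
  · exact hint.norm.const_mul _
  · refine .of_forall fun x => ?_
    have hc2 : Continuous fun w : E => ‖w - x‖ ^ p :=
      Continuous.rpow_const (by fun_prop) fun w => Or.inr hp.le
    exact (hc2.const_smul (f x)).continuousAt

theorem integral_repr [Nontrivial E] (hp : 0 < p) (hf : Measurable f) (hf0 : ∀ x, 0 ≤ f x)
    {u : E → ℝ} (hu : ∀ y, 0 < u y)
    (hueq : ∀ y, ENNReal.ofReal (u y) = ∫⁻ x, ENNReal.ofReal (dist x y ^ p * f x) ∂μ) :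
    Integrable (fun x => (1 + ‖x‖) ^ p * f x) μ ∧ u = fun y => ∫ x, f x • ‖y - x‖ ^ p ∂μ := by
  have hpc : ∀ y : E, Continuous fun x : E => dist x y ^ p := fun y =>
    Continuous.rpow_const (by fun_prop) fun x => Or.inr hp.le
  have hnn : ∀ y x, 0 ≤ dist x y ^ p * f x := fun y x =>
    mul_nonneg (Real.rpow_nonneg dist_nonneg _) (hf0 x)
  have hi : ∀ y, Integrable (fun x => dist x y ^ p * f x) μ := by
    intro y
    refine ⟨((hpc y).measurable.mul hf).aestronglyMeasurable, ?_⟩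
    rw [hasFiniteIntegral_iff_ofReal (.of_forall (hnn y)), ← hueq y]
    exact ENNReal.ofReal_lt_top
  constructor
  · obtain ⟨e, he⟩ := exists_norm_eq E (zero_le_one (α := ℝ))
    have hc1 : Continuous fun x : E => (1 + ‖x‖) ^ p :=
      Continuous.rpow_const (by fun_prop) fun x => Or.inr hp.le
    refine (((hi 0).add (hi e)).const_mul (4 ^ p)).mono'
      (hc1.measurable.mul hf).aestronglyMeasurable (.of_forall fun x => ?_)
    rw [Real.norm_of_nonneg (mul_nonneg (by positivity) (hf0 x))]
    simp only [Pi.add_apply]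
    rw [← add_mul, ← mul_assoc]
    refine mul_le_mul_of_nonneg_right ?_ (hf0 x)
    have h1 : 1 ≤ dist x 0 + dist x e := by
      have := dist_triangle_left e 0 x
      simp only [dist_zero_right, he] at this ⊢
      linarith
    have h2 : 1 + ‖x‖ ≤ 4 * max (dist x 0) (dist x e) := by
      have := le_max_left (dist x 0) (dist x e)
      have := le_max_right (dist x 0) (dist x e)
      simp only [dist_zero_right] at *
      linarith
    calc (1 + ‖x‖) ^ p ≤ (4 * max (dist x 0) (dist x e)) ^ p :=
          Real.rpow_le_rpow (by positivity) h2 hp.le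
      _ = 4 ^ p * max (dist x 0) (dist x e) ^ p :=
          Real.mul_rpow (by norm_num) (by positivity)
      _ ≤ _ := by
        gcongr
        have ha : 0 ≤ dist x 0 ^ p := Real.rpow_nonneg dist_nonneg _
        have hb : 0 ≤ dist x e ^ p := Real.rpow_nonneg dist_nonneg _
        rcases max_choice (dist x 0) (dist x e) with h | h <;> rw [h] <;> linarith
  · ext y
    have h1 := hueq y
    rw [← ofReal_integral_eq_lintegral_ofReal (hi y) (.of_forall (hnn y)),
      ENNReal.ofReal_eq_ofReal_iff (hu y).le (integral_nonneg (hnn y))] at h1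
    rw [h1]
    congr 1
    ext x
    rw [dist_comm, dist_eq_norm, smul_eq_mul, mul_comm]

end final
end SmoothSys

/-- **Smoothness of positive solutions of the integral system** (Lemma 3.5):
for `1 ≤ n < α` and `θ, κ < 0`, if `(u, v)` is a pair of positive measurable solutions of
`u(y) = ∫ |x-y|^(α-n) v(x)^κ dx`, `v(x) = ∫ |x-y|^(α-n) u(y)^θ dy`, then
`u, v ∈ C^∞(ℝⁿ)`. -/
theorem integral_system_smoothness (n : ℕ) (hn : 1 ≤ n) (α θ κ : ℝ)
    (hα : (n : ℝ) < α) (hθ : θ < 0) (hκ : κ < 0)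
    (u v : EuclideanSpace ℝ (Fin n) → ℝ)
    (hu : Measurable u) (hv : Measurable v)
    (hupos : ∀ y, 0 < u y) (hvpos : ∀ x, 0 < v x)
    (hueq : ∀ y, ENNReal.ofReal (u y) =
      ∫⁻ x, ENNReal.ofReal (dist x y ^ (α - n) * v x ^ κ))
    (hveq : ∀ x, ENNReal.ofReal (v x) =
      ∫⁻ y, ENNReal.ofReal (dist x y ^ (α - n) * u y ^ θ)) :
    ContDiff ℝ (⊤ : ℕ∞) u ∧ ContDiff ℝ (⊤ : ℕ∞) v := by
  have : NeZero n := ⟨by omega⟩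
  have hp : 0 < α - n := by linarith
  obtain ⟨iv, eu⟩ := SmoothSys.integral_repr volume hp (f := fun x => v x ^ κ)
    (hv.pow_const κ) (fun x => (Real.rpow_pos_of_pos (hvpos x) κ).le) hupos hueq
  obtain ⟨iu, ev⟩ := SmoothSys.integral_repr volume hp (f := fun x => u x ^ θ)
    (hu.pow_const θ) (fun x => (Real.rpow_pos_of_pos (hupos x) θ).le) hvpos
    (fun y => by rw [hveq y]; simp only [dist_comm])
  have key : ∀ m : ℕ, ContDiff ℝ m u ∧ ContDiff ℝ m v := by
    intro m
    induction m with
    | zero =>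
      constructor
      · refine contDiff_zero.2 ?_
        rw [eu]
        exact SmoothSys.base_continuous volume hp (hv.pow_const κ).aestronglyMeasurable iv
      · refine contDiff_zero.2 ?_
        rw [ev]
        exact SmoothSys.base_continuous volume hp (hu.pow_const θ).aestronglyMeasurable iu
    | succ m ih =>
      push_cast
      constructor
      · rw [eu]
        exact SmoothSys.step_contDiff volume hp m
          (ih.2.rpow_const_of_ne fun x => (hvpos x).ne') iv
      · rw [ev]
        exact SmoothSys.step_contDiff volume hp m
          (ih.1.rpow_const_of_ne fun x => (hupos x).ne') iu
  exact ⟨contDiff_infty.2 fun m => (key m).1, contDiff_infty.2 fun m => (key m).2⟩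
end
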